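/- arXiv:2508.09794 — 4 statements merged into one kernel-verified Lean document; each statement's English description precedes it below -/
import Mathlib

section
/- Let (R, ν) be a normalized BV₀ pair on (−1,1) of class BV₊ on I = (a₋, a₊), and let c ∈ ℝ. For f ∈ D^I_{R,ν} define ĝ_f : [−1,1] → ℝ by ĝ_f(t) = (T_{R,ν}f)(t) + c·f(0)·|t| for t ∈ I, ĝ_f(t) = (lim_{s→a₊⁻}(T_{R,ν}f)(s)/a₊ + c·f(0))·t for t ∈ [a₊,1], and ĝ_f(t) = (lim_{s→a₋⁺}(T_{R,ν}f)(s)/a₋ − c·f(0))·t for t ∈ [−1,a₋]. Then the map f ↦ ĝ_f is a bijection from D^I_{R,ν} onto the set of all continuous functions g : [−1,1] → ℝ satisfying g(t) = (g(a₊)/a₊)·t for all t ∈ [a₊,1] and g(t) = (g(a₋)/a₋)·t for all t ∈ [−1,a₋]. -/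
open MeasureTheory Set Filter Function Topology

/-- A normalized BV₀ pair on `(-1,1)`: a signed Borel measure, represented by its
mutually singular positive part `νp` and negative part `νm`, that is finite on compact
subsets of `(-1,1)`, gives no mass to `{0}` and lives on `(-1,1)`, together with a
function `R` satisfying the fundamental-theorem-of-calculus relations. -/
structure NormBV0 where
  R : ℝ → ℝ
  νp : Measure ℝ
  νm : Measure ℝ
  sing : νp.MutuallySingular νm
  supp_p : νp (Set.Ioo (-1 : ℝ) 1)ᶜ = 0
  supp_m : νm (Set.Ioo (-1 : ℝ) 1)ᶜ = 0
  locfin_p : ∀ K : Set ℝ, IsCompact K → K ⊆ Set.Ioo (-1 : ℝ) 1 → νp K ≠ ⊤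
  locfin_m : ∀ K : Set ℝ, IsCompact K → K ⊆ Set.Ioo (-1 : ℝ) 1 → νm K ≠ ⊤
  zero_p : νp {0} = 0
  zero_m : νm {0} = 0
  fund_pos : ∀ t ∈ Set.Ico (0 : ℝ) 1,
    R t = R 0 - ((∫ s in Set.Ioc (0 : ℝ) t, s ∂νp) - (∫ s in Set.Ioc (0 : ℝ) t, s ∂νm))
  fund_neg : ∀ t ∈ Set.Ioc (-1 : ℝ) 0,
    R t = R 0 + ((∫ s in Set.Ico t (0 : ℝ), s ∂νp) - (∫ s in Set.Ico t (0 : ℝ), s ∂νm))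

/-- The integral of `f` over `S` with respect to the signed measure `νp - νm`. -/
noncomputable def NormBV0.integ (P : NormBV0) (S : Set ℝ) (f : ℝ → ℝ) : ℝ :=
  (∫ s in S, f s ∂P.νp) - (∫ s in S, f s ∂P.νm)

/-- The transform `T_{R,ν} f`. -/
noncomputable def NormBV0.T (P : NormBV0) (f : ℝ → ℝ) (t : ℝ) : ℝ :=
  if 0 < t then P.R t * f t + t * P.integ (Set.Ioc 0 t) f
  else P.R t * f t - t * P.integ (Set.Ico t 0) f

/-- The pair `(R,ν)` is of class `BV₊` on the subinterval `I = (am, ap)`: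
`|ν|((-1,1)) < ∞`, `R > 0` on `I`, and `ν` or `-ν` is nonnegative. -/
def NormBV0.BVplusOn (P : NormBV0) (am ap : ℝ) : Prop :=
  P.νp (Set.Ioo (-1 : ℝ) 1) ≠ ⊤ ∧ P.νm (Set.Ioo (-1 : ℝ) 1) ≠ ⊤ ∧
  (∀ t ∈ Set.Ioo am ap, 0 < P.R t) ∧ (P.νm = 0 ∨ P.νp = 0)

/-- The class `D^I_{R,ν}` of continuous functions on `I = (am, ap)` whose four boundary
limits exist. -/
def NormBV0.memDI (P : NormBV0) (am ap : ℝ) (f : ℝ → ℝ) : Prop :=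
  ContinuousOn f (Set.Ioo am ap) ∧
  (∃ L : ℝ, Tendsto (fun t => P.R t * f t) (𝓝[<] ap) (𝓝 L)) ∧
  (∃ L : ℝ, Tendsto (fun t => P.R t * f t) (𝓝[>] am) (𝓝 L)) ∧
  (∃ L : ℝ, Tendsto (fun t => P.integ (Set.Ioc 0 t) f) (𝓝[<] ap) (𝓝 L)) ∧
  (∃ L : ℝ, Tendsto (fun t => P.integ (Set.Ico t 0) f) (𝓝[>] am) (𝓝 L))

/-!
The inverse of `T_{R,ν}` is again such a transform, namely `T_{1/R, -ν/(R R⁻)}` with `R⁻` the left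
limit of `R`. This is a computation with the product rule for Stieltjes integrals (Fubini on a
triangle), once `1/R` is identified as the weight belonging to the measure `-ν/(R R⁻)`. The latter
holds because `t` times the difference of the two weights is annihilated by `T_{R,ν}`, and
transforms are injective by a Gronwall argument: rewritten with `R⁻`, the equation `T f = 0`
bounds `f t` by the integral of `f` over the open interval `(0, t)`, and atoms do no harm because
the mass of `(τ, c]` tends to `0` as `c` decreases to `τ`.

The function `T f` is continuous although `R` jumps, because
`T f(t) = R(0) f(t) + ∫_{(0,t]} (t f(s) - s f(t)) dν(s)` and the integrand vanishes at `s = t`.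
The limit of `∫ f dν` at the endpoint `a` exists for every `T f` continuous up to `a`: if
`R(a⁻) > 0` the dual measure is finite, and if `R(a⁻) = 0` then `ν ≥ 0` and the limit is computed
by Stolz-Cesàro, comparing with the dual integral of `s`, which is `1/R(0) - 1/R(t)`. The negative
half-line is reduced to the positive one by reflection.
-/

section Prod

variable {α β 𝕜 : Type*} [MeasurableSpace α] [MeasurableSpace β] [RCLike 𝕜]
  {μ : Measure α} {ν : Measure β} [SFinite ν] {S : Set (α × β)} {x : α → 𝕜} {y : β → 𝕜}

lemma aestronglyMeasurable_setIntegral_preimage_mk (hS : MeasurableSet S)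
    (hy : AEStronglyMeasurable y ν) :
    AEStronglyMeasurable (fun s => ∫ u in Prod.mk s ⁻¹' S, y u ∂ν) μ :=
  (hy.comp_snd.indicator hS).integral_prod_right'.congr <| ae_of_all μ fun _ =>
    integral_indicator (measurable_prodMk_left hS)

lemma integrable_mul_setIntegral_preimage_mk (hS : MeasurableSet S) (hx : Integrable x μ)
    (hy : Integrable y ν) :
    Integrable (fun s => x s * ∫ u in Prod.mk s ⁻¹' S, y u ∂ν) μ :=
  hx.mul_bdd (c := ∫ u, ‖y u‖ ∂ν) (aestronglyMeasurable_setIntegral_preimage_mk hS hy.1) <|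
    ae_of_all μ fun _ => (norm_integral_le_integral_norm _).trans <|
      setIntegral_le_integral hy.norm (ae_of_all ν fun _ => norm_nonneg _)

end Prod

section Primitive

variable {α 𝕜 : Type*} [LinearOrder α] [TopologicalSpace α] [OrderClosedTopology α]
  [MeasurableSpace α] [BorelSpace α] [RCLike 𝕜]
  {μ : Measure α} {a b : α} {x y : α → 𝕜}

lemma setIntegral_Ioc_eq_Ioo_add (hab : a < b) (hx : IntegrableOn x (Ioc a b) μ) :
    ∫ s in Ioc a b, x s ∂μ = (∫ s in Ioo a b, x s ∂μ) + μ.real {b} • x b := by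
  rw [← Ioo_union_right hab] at hx ⊢
  rw [setIntegral_union (by simp) (measurableSet_singleton b) hx.left_of_union hx.right_of_union,
    integral_singleton]

lemma restrict_Ioc_restrict_Iic {s : α} (hs : s ∈ Ioc a b) :
    (μ.restrict (Ioc a b)).restrict (Iic s) = μ.restrict (Ioc a s) := by
  rw [Measure.restrict_restrict measurableSet_Iic, inter_comm, Ioc_inter_Iic, min_eq_right hs.2]

lemma restrict_Ioc_restrict_Iio {s : α} (hs : s ∈ Ioc a b) :
    (μ.restrict (Ioc a b)).restrict (Iio s) = μ.restrict (Ioo a s) := by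
  rw [Measure.restrict_restrict measurableSet_Iio]
  congr 1
  ext u
  exact ⟨fun h => ⟨h.2.1, h.1⟩, fun h => ⟨h.2, h.1, h.2.le.trans hs.2⟩⟩

variable [SecondCountableTopology α] [SFinite μ]

lemma aestronglyMeasurable_setIntegral_Ioc
    (hx : AEStronglyMeasurable x (μ.restrict (Ioc a b))) :
    AEStronglyMeasurable (fun s => ∫ u in Ioc a s, x u ∂μ) (μ.restrict (Ioc a b)) := by
  refine (aestronglyMeasurable_setIntegral_preimage_mk
    (measurableSet_le measurable_snd measurable_fst) hx).congr ?_
  filter_upwards [ae_restrict_mem measurableSet_Ioc] with s hs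
  exact congrArg (∫ u, x u ∂·) (restrict_Ioc_restrict_Iic hs)

lemma aestronglyMeasurable_setIntegral_Ioo
    (hx : AEStronglyMeasurable x (μ.restrict (Ioc a b))) :
    AEStronglyMeasurable (fun s => ∫ u in Ioo a s, x u ∂μ) (μ.restrict (Ioc a b)) := by
  refine (aestronglyMeasurable_setIntegral_preimage_mk
    (measurableSet_lt measurable_snd measurable_fst) hx).congr ?_
  filter_upwards [ae_restrict_mem measurableSet_Ioc] with s hs
  exact congrArg (∫ u, x u ∂·) (restrict_Ioc_restrict_Iio hs)

lemma integrableOn_mul_setIntegral_Ioc (hx : IntegrableOn x (Ioc a b) μ)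
    (hy : IntegrableOn y (Ioc a b) μ) :
    IntegrableOn (fun s => x s * ∫ u in Ioc a s, y u ∂μ) (Ioc a b) μ := by
  refine (integrable_mul_setIntegral_preimage_mk
    (measurableSet_le measurable_snd measurable_fst) hx hy).congr ?_
  filter_upwards [ae_restrict_mem measurableSet_Ioc] with s hs
  exact congrArg (fun ρ => x s * ∫ u, y u ∂ρ) (restrict_Ioc_restrict_Iic hs)

lemma integrableOn_mul_setIntegral_Ioo (hx : IntegrableOn x (Ioc a b) μ)
    (hy : IntegrableOn y (Ioc a b) μ) :
    IntegrableOn (fun s => x s * ∫ u in Ioo a s, y u ∂μ) (Ioc a b) μ := by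
  refine (integrable_mul_setIntegral_preimage_mk
    (measurableSet_lt measurable_snd measurable_fst) hx hy).congr ?_
  filter_upwards [ae_restrict_mem measurableSet_Ioc] with s hs
  exact congrArg (fun ρ => x s * ∫ u, y u ∂ρ) (restrict_Ioc_restrict_Iio hs)

lemma integral_mul_integral_eq_add_integral_Iic_Iio (hx : Integrable x μ)
    (hy : Integrable y μ) :
    (∫ s, x s ∂μ) * ∫ s, y s ∂μ =
      (∫ s, x s * (∫ u in Iic s, y u ∂μ) ∂μ) + ∫ s, y s * (∫ u in Iio s, x u ∂μ) ∂μ := by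
  have hxy : Integrable (fun p : α × α => x p.1 * y p.2) (μ.prod μ) := hx.mul_prod hy
  have hS : MeasurableSet {p : α × α | p.2 ≤ p.1} := measurableSet_le measurable_snd measurable_fst
  rw [← integral_prod_mul, ← integral_add_compl hS hxy, ← integral_indicator hS,
    ← integral_indicator hS.compl, integral_prod _ (hxy.indicator hS),
    integral_prod_symm _ (hxy.indicator hS.compl)]
  congr 2 <;> ext s
  · rw [← integral_const_mul, ← integral_indicator measurableSet_Iic]
    rfl
  · rw [← integral_const_mul, ← integral_indicator measurableSet_Iio]
    simp only [indicator, mem_compl_iff, mem_ofPred_eq, not_le, mem_Iio, mul_comm]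

lemma setIntegral_Ioc_mul_setIntegral_Ioc (hx : IntegrableOn x (Ioc a b) μ)
    (hy : IntegrableOn y (Ioc a b) μ) :
    (∫ s in Ioc a b, x s ∂μ) * ∫ s in Ioc a b, y s ∂μ =
      (∫ s in Ioc a b, x s * (∫ u in Ioc a s, y u ∂μ) ∂μ) +
        ∫ s in Ioc a b, y s * (∫ u in Ioo a s, x u ∂μ) ∂μ := by
  rw [integral_mul_integral_eq_add_integral_Iic_Iio hx hy]
  congr 1 <;> refine setIntegral_congr_fun measurableSet_Ioc fun s hs => ?_
  · simp only [restrict_Ioc_restrict_Iic hs]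
  · simp only [restrict_Ioc_restrict_Iio hs]

end Primitive

section Real

variable {μ : Measure ℝ} {a b : ℝ}

lemma tendsto_setIntegral_Ioc_nhdsLT {x : ℝ → ℝ} (hx : IntegrableOn x (Ioo a b) μ) :
    Tendsto (fun t => ∫ s in Ioc a t, x s ∂μ) (𝓝[<] b) (𝓝 (∫ s in Ioo a b, x s ∂μ)) := by
  have hcover : AECover (μ.restrict (Ioo a b)) (𝓝[<] b) (Ioc a) :=
    ⟨(ae_restrict_mem measurableSet_Ioo).mono fun s hs => by
      filter_upwards [Ioo_mem_nhdsLT hs.2] with t ht using ⟨hs.1, ht.1.le⟩,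
      fun _ => measurableSet_Ioc⟩
  refine (hcover.integral_tendsto_of_countably_generated hx).congr' ?_
  filter_upwards [self_mem_nhdsWithin] with t ht
  rw [Measure.restrict_restrict_of_subset (Ioc_subset_Ioo_right ht)]

lemma tendsto_setIntegral_Ioc_nhdsGT {x : ℝ → ℝ} (hab : a < b) (hx : IntegrableOn x (Ioc a b) μ) :
    Tendsto (fun t => ∫ s in Ioc a t, x s ∂μ) (𝓝[>] a) (𝓝 0) := by
  have hcover : AECover (μ.restrict (Ioc a b)) (𝓝[>] a) fun t => Ioc t b :=
    ⟨(ae_restrict_mem measurableSet_Ioc).mono fun s hs => by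
      filter_upwards [Ioo_mem_nhdsGT hs.1] with t ht using ⟨ht.2, hs.2⟩,
      fun _ => measurableSet_Ioc⟩
  have hlim := (hcover.integral_tendsto_of_countably_generated hx).const_sub
    (∫ s in Ioc a b, x s ∂μ)
  rw [sub_self] at hlim
  refine hlim.congr' ?_
  filter_upwards [Ioo_mem_nhdsGT hab] with t ht
  rw [Measure.restrict_restrict_of_subset (Ioc_subset_Ioc_left ht.1.le), sub_eq_iff_eq_add,
    ← Ioc_union_Ioc_eq_Ioc ht.1.le ht.2.le]
  exact setIntegral_union (Ioc_disjoint_Ioc_of_le le_rfl) measurableSet_Ioc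
    (hx.mono_set (Ioc_subset_Ioc_right ht.2.le)) (hx.mono_set (Ioc_subset_Ioc_left ht.1.le))

lemma min_sub_setIntegral_le {x : ℝ → ℝ} {S S' : Set ℝ} {r : ℝ} (hSS' : S ⊆ S')
    (hS' : MeasurableSet S') (hx : IntegrableOn x S' μ)
    (hx0 : (∀ s ∈ S', 0 ≤ x s) ∨ ∀ s ∈ S', x s ≤ 0) :
    min r (r - ∫ s in S', x s ∂μ) ≤ r - ∫ s in S, x s ∂μ := by
  rcases hx0 with hx0 | hx0
  · refine (min_le_right _ _).trans (sub_le_sub_left ?_ r)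
    exact setIntegral_mono_set hx ((ae_restrict_mem hS').mono hx0) hSS'.eventuallyLE
  · refine (min_le_left _ _).trans (le_sub_self_iff r |>.2 ?_)
    exact integral_nonpos_of_ae ((ae_restrict_of_ae_restrict_of_subset hSS')
      ((ae_restrict_mem hS').mono hx0))

lemma abs_setIntegral_Ioc_le_add {x p : ℝ → ℝ} {c t ε : ℝ} (hc : c ∈ Ico a t)
    (hx : IntegrableOn x (Ioc a t) μ) (hp : IntegrableOn p (Ioc a t) μ)
    (hp0 : ∀ s ∈ Ioc a t, 0 ≤ p s) (hε : 0 ≤ ε) (hxp : ∀ s ∈ Ioc c t, |x s| ≤ ε * p s) :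
    |∫ s in Ioc a t, x s ∂μ| ≤ |∫ s in Ioc a c, x s ∂μ| + ε * ∫ s in Ioc a t, p s ∂μ := by
  have hct : Ioc c t ⊆ Ioc a t := Ioc_subset_Ioc_left hc.1
  have hac : Ioc a c ⊆ Ioc a t := Ioc_subset_Ioc_right hc.2.le
  have hsplit : ∫ s in Ioc a t, x s ∂μ = (∫ s in Ioc a c, x s ∂μ) + ∫ s in Ioc c t, x s ∂μ := by
    rw [← Ioc_union_Ioc_eq_Ioc hc.1 hc.2.le]
    exact setIntegral_union (Ioc_disjoint_Ioc_of_le le_rfl) measurableSet_Ioc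
      (hx.mono_set hac) (hx.mono_set hct)
  rw [hsplit, ← integral_const_mul]
  refine (abs_add_le _ _).trans (add_le_add_right ?_ _)
  calc |∫ s in Ioc c t, x s ∂μ| ≤ ∫ s in Ioc c t, ε * p s ∂μ :=
      norm_integral_le_of_norm_le (f := x) ((hp.mono_set hct).const_mul ε)
        ((ae_restrict_mem measurableSet_Ioc).mono hxp)
    _ ≤ ∫ s in Ioc a t, ε * p s ∂μ := setIntegral_mono_set (hp.const_mul ε)
        ((ae_restrict_mem measurableSet_Ioc).mono fun s hs => mul_nonneg hε (hp0 s hs))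
        hct.eventuallyLE

lemma isLittleO_setIntegral_Ioc {x p : ℝ → ℝ} (hab : a < b)
    (hx : ∀ t ∈ Ioo a b, IntegrableOn x (Ioc a t) μ)
    (hp : ∀ t ∈ Ioo a b, IntegrableOn p (Ioc a t) μ) (hp0 : ∀ t ∈ Ioo a b, 0 ≤ p t)
    (hxp : x =o[𝓝[<] b] p) (htop : Tendsto (fun t => ∫ s in Ioc a t, p s ∂μ) (𝓝[<] b) atTop) :
    (fun t => ∫ s in Ioc a t, x s ∂μ) =o[𝓝[<] b] fun t => ∫ s in Ioc a t, p s ∂μ := by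
  refine Asymptotics.isLittleO_iff.2 fun ε hε => ?_
  obtain ⟨c, hc, hcb⟩ := (mem_nhdsLT_iff_exists_mem_Ico_Ioo_subset hab).1
    (Asymptotics.isLittleO_iff.1 hxp (half_pos hε))
  filter_upwards [Ioo_mem_nhdsLT hc.2,
    htop.eventually_ge_atTop (2 / ε * |∫ s in Ioc a c, x s ∂μ|)] with t ht hlarge
  have htI : t ∈ Ioo a b := ⟨hc.1.trans_lt ht.1, ht.2⟩
  have hp0' : ∀ s ∈ Ioc a t, 0 ≤ p s := fun s hs => hp0 s ⟨hs.1, hs.2.trans_lt ht.2⟩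
  have hxp' : ∀ s ∈ Ioc c t, |x s| ≤ ε / 2 * p s := fun s hs => by
    have h := hcb ⟨hs.1, hs.2.trans_lt ht.2⟩
    rwa [mem_ofPred_eq, Real.norm_of_nonneg (hp0' s ⟨hc.1.trans_lt hs.1, hs.2⟩)] at h
  have hbound := abs_setIntegral_Ioc_le_add ⟨hc.1, ht.1⟩ (hx t htI) (hp t htI) hp0'
    (half_pos hε).le hxp'
  rw [div_mul_eq_mul_div, div_le_iff₀' hε] at hlarge
  rw [Real.norm_of_nonneg (setIntegral_nonneg measurableSet_Ioc hp0')]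
  refine hbound.trans ?_
  linarith

lemma abs_setIntegral_Ioo_mul_le {f k : ℝ → ℝ} {τ c t M : ℝ} (haτ : a ≤ τ)
    (hk : IntegrableOn k (Ioc τ c) μ) (hzero : ∀ s ∈ Ioc a τ, f s = 0)
    (hM : ∀ s ∈ Ioc τ c, |f s| ≤ M) (ht : t ∈ Ioc τ c) :
    |∫ s in Ioo a t, f s * k s ∂μ| ≤ M * ∫ s in Ioc τ c, |k s| ∂μ := by
  have hsub : Ioo τ t ⊆ Ioc τ c := fun s hs => ⟨hs.1, hs.2.le.trans ht.2⟩
  have hM0 : 0 ≤ M := (abs_nonneg _).trans (hM t ht)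
  have hkM : IntegrableOn (fun s => M * |k s|) (Ioc τ c) μ := hk.abs.const_mul M
  have hlocal : ∫ s in Ioo a t, f s * k s ∂μ = ∫ s in Ioo τ t, f s * k s ∂μ :=
    setIntegral_eq_of_subset_of_forall_sdiff_eq_zero measurableSet_Ioo (Ioo_subset_Ioo_left haτ)
      fun s hs => by
        rw [hzero s ⟨hs.1.1, not_lt.1 fun h => hs.2 ⟨h, hs.1.2⟩⟩, zero_mul]
  rw [hlocal, ← integral_const_mul]
  refine (norm_integral_le_of_norm_le (f := fun s => f s * k s) (hkM.mono_set hsub) ?_).trans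
    (setIntegral_mono_set hkM (ae_of_all _ fun s => mul_nonneg hM0 (abs_nonneg _))
      hsub.eventuallyLE)
  filter_upwards [ae_restrict_mem measurableSet_Ioo] with s hs
  rw [norm_mul]
  exact mul_le_mul_of_nonneg_right (hM s (hsub hs)) (abs_nonneg _)

lemma eventually_forall_Ioc_eq_zero {f k : ℝ → ℝ} {τ B C : ℝ} (hk : IntegrableOn k (Ioc a b) μ)
    (hB : ∀ t ∈ Icc a b, |f t| ≤ B)
    (hC : ∀ t ∈ Icc a b, |f t| ≤ C * |∫ s in Ioo a t, f s * k s ∂μ|)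
    (hτ : τ ∈ Ico a b) (hzero : ∀ s ∈ Icc a τ, f s = 0) :
    ∀ᶠ c in 𝓝[>] τ, ∀ s ∈ Ioc τ c, f s = 0 := by
  have hkτ := hk.mono_set (Ioc_subset_Ioc_left hτ.1)
  have hsmall : ∀ᶠ c in 𝓝[>] τ, |C| * ∫ s in Ioc τ c, |k s| ∂μ < 1 / 2 := by
    refine ((tendsto_setIntegral_Ioc_nhdsGT hτ.2 hkτ.abs).const_mul |C|).eventually_lt_const ?_
    norm_num
  filter_upwards [hsmall, Ioc_mem_nhdsGT hτ.2] with c hc hcI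
  have hsub : Ioc τ c ⊆ Icc a b := fun s hs => ⟨hτ.1.trans hs.1.le, hs.2.trans hcI.2⟩
  have hbdd : BddAbove ((fun s => |f s|) '' Ioc τ c) :=
    ⟨B, forall_mem_image.2 fun s hs => hB s (hsub hs)⟩
  set M := sSup ((fun s => |f s|) '' Ioc τ c)
  have hM : ∀ s ∈ Ioc τ c, |f s| ≤ M := fun s hs => le_csSup hbdd (mem_image_of_mem _ hs)
  have hM0 : 0 ≤ M := (abs_nonneg _).trans (hM c ⟨hcI.1, le_rfl⟩)
  have hhalf : M ≤ M / 2 := by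
    refine csSup_le ((nonempty_Ioc.2 hcI.1).image _) (forall_mem_image.2 fun t ht => ?_)
    calc |f t| ≤ C * |∫ s in Ioo a t, f s * k s ∂μ| := hC t (hsub ht)
      _ ≤ |C| * |∫ s in Ioo a t, f s * k s ∂μ| := by gcongr; exact le_abs_self C
      _ ≤ |C| * (M * ∫ s in Ioc τ c, |k s| ∂μ) := by
        gcongr
        exact abs_setIntegral_Ioo_mul_le hτ.1
          (hkτ.mono_set (Ioc_subset_Ioc_right hcI.2)) (fun s hs => hzero s ⟨hs.1.le, hs.2⟩) hM ht
      _ ≤ M / 2 := by nlinarith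
  exact fun s hs => abs_eq_zero.1 (le_antisymm ((hM s hs).trans (by linarith)) (abs_nonneg _))

lemma eq_zero_of_abs_le_mul_abs_setIntegral {f k : ℝ → ℝ} {B C : ℝ}
    (hk : IntegrableOn k (Ioc a b) μ) (hB : ∀ t ∈ Icc a b, |f t| ≤ B)
    (hC : ∀ t ∈ Icc a b, |f t| ≤ C * |∫ s in Ioo a t, f s * k s ∂μ|) :
    ∀ t ∈ Icc a b, f t = 0 := by
  have hvanish : ∀ t ∈ Icc a b, (∀ s ∈ Ico a t, f s = 0) → ∀ s ∈ Icc a t, f s = 0 := by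
    intro t ht h s hs
    rcases hs.2.lt_or_eq with hst | rfl
    · exact h s ⟨hs.1, hst⟩
    · have hint : ∫ u in Ioo a s, f u * k u ∂μ = 0 := setIntegral_eq_zero_of_forall_eq_zero
        fun u hu => by rw [h u ⟨hu.1.le, hu.2⟩, zero_mul]
      simpa [hint] using hC s ht
  rcases lt_or_ge b a with hba | hab
  · simp [hba]
  suffices h : Icc a b ⊆ {t | ∀ s ∈ Icc a t, f s = 0} from fun t ht => h ht t ⟨ht.1, le_rfl⟩
  refine IsClosed.Icc_subset_of_forall_mem_nhdsWithin ?_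
    (hvanish a (left_mem_Icc.2 hab) (by simp)) fun τ hτ => ?_
  · refine isClosed_of_closure_subset fun t ht => ?_
    have htI : t ∈ Icc a b := isClosed_Icc.closure_subset_iff.2 inter_subset_right ht
    refine ⟨hvanish t htI fun s hs => ?_, htI⟩
    obtain ⟨u, hu, hus⟩ := mem_closure_iff_nhds.1 ht _ (Ioi_mem_nhds hs.2)
    exact hus.1 s ⟨hs.1, hu.le⟩
  · filter_upwards [eventually_forall_Ioc_eq_zero hk hB hC hτ.2 hτ.1] with c hc s hs
    rcases le_or_gt s τ with h | h
    exacts [hτ.1 s ⟨hs.1, h⟩, hc s ⟨h, hs.2⟩]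

end Real

/-- The function `R(t) = r - ∫_{(0,t]} s dν(s)` of a normalized pair on the half-line `t ≥ 0`.
Here and below a signed measure `ν` is encoded by a positive measure `μ` and a density `k`,
`dν = k dμ`. -/
noncomputable def bvWeight (r : ℝ) (k : ℝ → ℝ) (μ : Measure ℝ) (t : ℝ) : ℝ :=
  r - ∫ s in Ioc 0 t, s * k s ∂μ

/-- The left limit `R(t⁻)` of the function `R` of a pair on the half-line, for `t > 0`. -/
noncomputable def bvWeightLeft (r : ℝ) (k : ℝ → ℝ) (μ : Measure ℝ) (t : ℝ) : ℝ :=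
  r - ∫ s in Ioo 0 t, s * k s ∂μ

/-- The transform `T_{R,ν} f` on the half-line `t ≥ 0`. -/
noncomputable def bvTransform (r : ℝ) (k : ℝ → ℝ) (μ : Measure ℝ) (f : ℝ → ℝ) (t : ℝ) : ℝ :=
  bvWeight r k μ t * f t + t * ∫ s in Ioc 0 t, f s * k s ∂μ

/-- The density of the measure `-ν / (R R⁻)`, where `R⁻` is the left limit of `R`. Together with
`1 / R` this measure forms the pair dual to `(R, ν)`, whose transform inverts `T_{R,ν}`. -/
noncomputable def dualDensity (r : ℝ) (k : ℝ → ℝ) (μ : Measure ℝ) (s : ℝ) : ℝ :=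
  -(bvWeight r k μ s * bvWeightLeft r k μ s)⁻¹ * k s

section HalfLine

variable {μ : Measure ℝ} {r b : ℝ} {f g k : ℝ → ℝ}

lemma integrableOn_Ioc_continuousOn_mul (hk : IntegrableOn k (Ioc 0 b) μ)
    (hf : ContinuousOn f (Icc 0 b)) : IntegrableOn (fun s => f s * k s) (Ioc 0 b) μ :=
  hk.continuousOn_mul_of_subset hf isCompact_Icc measurableSet_Ioc Ioc_subset_Icc_self

lemma bvTransform_eq_add_setIntegral (hk : IntegrableOn k (Ioc 0 b) μ)
    (hf : ContinuousOn f (Icc 0 b)) {t : ℝ} (ht : t ∈ Icc 0 b) :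
    bvTransform r k μ f t =
      r * f t + ∫ s in Ioc 0 b, (t * f (min s t) - min s t * f t) * k s ∂μ := by
  have htb : Ioc 0 t ⊆ Ioc 0 b := Ioc_subset_Ioc_right ht.2
  have hfk := (integrableOn_Ioc_continuousOn_mul hk hf).mono_set htb
  have hsk : IntegrableOn (fun s => s * k s) (Ioc 0 t) μ :=
    (integrableOn_Ioc_continuousOn_mul hk continuousOn_id).mono_set htb
  have hlocal : ∫ s in Ioc 0 b, (t * f (min s t) - min s t * f t) * k s ∂μ =
      ∫ s in Ioc 0 t, (t * (f s * k s) - f t * (s * k s)) ∂μ := by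
    rw [setIntegral_eq_of_subset_of_forall_sdiff_eq_zero measurableSet_Ioc htb]
    · refine setIntegral_congr_fun measurableSet_Ioc fun s hs => ?_
      simp only [min_eq_left hs.2]
      ring
    · intro s hs
      have hts : t ≤ s := (not_le.1 fun h => hs.2 ⟨hs.1.1, h⟩).le
      rw [min_eq_right hts, sub_self, zero_mul]
  rw [hlocal, integral_sub (hfk.const_mul t) (hsk.const_mul (f t)), integral_const_mul,
    integral_const_mul, bvTransform, bvWeight]
  ring

lemma continuousOn_bvTransform (hk : IntegrableOn k (Ioc 0 b) μ) (hf : ContinuousOn f (Icc 0 b)) :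
    ContinuousOn (bvTransform r k μ f) (Icc 0 b) := by
  obtain ⟨M, hM⟩ := isCompact_Icc.exists_bound_of_continuousOn hf
  have hmin : ∀ s ∈ Ioc 0 b, ∀ t ∈ Icc 0 b, min s t ∈ Icc 0 b := fun s hs t ht =>
    ⟨le_min hs.1.le ht.1, (min_le_left s t).trans hs.2⟩
  refine ContinuousOn.congr ?_ fun t ht => bvTransform_eq_add_setIntegral hk hf ht
  refine (hf.const_mul r).add (continuousOn_of_dominated (bound := fun s => (b * M + b * M) * |k s|)
    (fun t ht => ?_) (fun t ht => ?_) (hk.abs.const_mul _) ?_)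
  · refine AEStronglyMeasurable.mul (ContinuousOn.aestronglyMeasurable ?_ measurableSet_Ioc) hk.1
    exact ((hf.comp (by fun_prop) fun s hs => hmin s hs t ht).const_mul t).sub (by fun_prop)
  · filter_upwards [ae_restrict_mem measurableSet_Ioc] with s hs
    have hst := hmin s hs t ht
    rw [norm_mul]
    refine mul_le_mul_of_nonneg_right ((norm_sub_le _ _).trans ?_) (abs_nonneg _)
    simp only [norm_mul, Real.norm_of_nonneg ht.1, Real.norm_of_nonneg hst.1]
    have hb : 0 ≤ b := ht.1.trans ht.2
    exact add_le_add (mul_le_mul ht.2 (hM _ hst) (norm_nonneg _) hb)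
      (mul_le_mul hst.2 (hM t ht) (norm_nonneg _) hb)
  · filter_upwards [ae_restrict_mem measurableSet_Ioc] with s hs
    refine ContinuousOn.mul ?_ continuousOn_const
    exact (continuousOn_id.mul (hf.comp (by fun_prop) (hmin s hs))).sub
      (ContinuousOn.mul (by fun_prop) hf)

lemma integrableOn_id_mul (hk : IntegrableOn k (Ioc 0 b) μ) :
    IntegrableOn (fun s => s * k s) (Ioc 0 b) μ :=
  integrableOn_Ioc_continuousOn_mul hk continuousOn_id

lemma tendsto_bvWeight_nhdsLT {t : ℝ} (hk : IntegrableOn (fun s => s * k s) (Ioo 0 t) μ) :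
    Tendsto (bvWeight r k μ) (𝓝[<] t) (𝓝 (bvWeightLeft r k μ t)) :=
  (tendsto_setIntegral_Ioc_nhdsLT hk).const_sub r

lemma exists_abs_bvWeight_le (hk : IntegrableOn k (Ioc 0 b) μ) :
    ∃ B, ∀ t ∈ Icc 0 b, |bvWeight r k μ t| ≤ B := by
  have hsk := (integrableOn_id_mul hk).abs
  refine ⟨|r| + ∫ s in Ioc 0 b, |s * k s| ∂μ, fun t ht => (abs_sub _ _).trans ?_⟩
  have htb : Ioc 0 t ⊆ Ioc 0 b := Ioc_subset_Ioc_right ht.2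
  gcongr
  exact abs_integral_le_integral_abs.trans
    (setIntegral_mono_set hsk (ae_of_all _ fun _ => abs_nonneg _) htb.eventuallyLE)

lemma bvWeight_zero : bvWeight r k μ 0 = r := by simp [bvWeight]

lemma bvWeightLeft_zero : bvWeightLeft r k μ 0 = r := by simp [bvWeightLeft]

lemma bvTransform_zero : bvTransform r k μ f 0 = r * f 0 := by simp [bvTransform, bvWeight_zero]

variable {δ : ℝ}

lemma le_bvWeightLeft (hk : IntegrableOn k (Ioc 0 b) μ)
    (hw : ∀ t ∈ Icc 0 b, δ ≤ bvWeight r k μ t) {t : ℝ} (ht : t ∈ Icc 0 b) :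
    δ ≤ bvWeightLeft r k μ t := by
  rcases ht.1.eq_or_lt with rfl | h0
  · simpa only [bvWeightLeft_zero, bvWeight_zero] using hw 0 ht
  · refine ge_of_tendsto (tendsto_bvWeight_nhdsLT ((integrableOn_id_mul hk).mono_set
      fun s hs => ⟨hs.1, hs.2.le.trans ht.2⟩)) ?_
    filter_upwards [Ioo_mem_nhdsLT h0] with s hs using hw s ⟨hs.1.le, hs.2.le.trans ht.2⟩

lemma bvTransform_eq_bvWeightLeft_mul_add {t : ℝ} (hk : IntegrableOn k (Ioc 0 t) μ)
    (hfk : IntegrableOn (fun s => f s * k s) (Ioc 0 t) μ) (ht : 0 ≤ t) :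
    bvTransform r k μ f t = bvWeightLeft r k μ t * f t + t * ∫ s in Ioo 0 t, f s * k s ∂μ := by
  rcases ht.eq_or_lt with rfl | h0
  · simp [bvTransform_zero, bvWeightLeft_zero]
  · rw [bvTransform, bvWeight, bvWeightLeft, setIntegral_Ioc_eq_Ioo_add h0 hfk,
      setIntegral_Ioc_eq_Ioo_add h0 (integrableOn_id_mul hk)]
    simp only [smul_eq_mul]
    ring

lemma eq_zero_of_bvTransform_eq_zero {B : ℝ} (hk : IntegrableOn k (Ioc 0 b) μ) (hδ : 0 < δ)
    (hw : ∀ t ∈ Icc 0 b, δ ≤ bvWeight r k μ t) (hfk : IntegrableOn (fun s => f s * k s) (Ioc 0 b) μ)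
    (hB : ∀ t ∈ Icc 0 b, |f t| ≤ B) (hT : ∀ t ∈ Icc 0 b, bvTransform r k μ f t = 0) :
    ∀ t ∈ Icc 0 b, f t = 0 := by
  refine eq_zero_of_abs_le_mul_abs_setIntegral (C := b / δ) hk hB fun t ht => ?_
  have htb : Ioc 0 t ⊆ Ioc 0 b := Ioc_subset_Ioc_right ht.2
  have hT' := hT t ht
  rw [bvTransform_eq_bvWeightLeft_mul_add (hk.mono_set htb) (hfk.mono_set htb) ht.1,
    add_eq_zero_iff_eq_neg] at hT'
  rw [div_mul_eq_mul_div, le_div_iff₀' hδ]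
  calc δ * |f t| ≤ bvWeightLeft r k μ t * |f t| := by gcongr; exact le_bvWeightLeft hk hw ht
    _ = t * |∫ s in Ioo 0 t, f s * k s ∂μ| := by
      rw [← abs_of_pos (hδ.trans_le (le_bvWeightLeft hk hw ht)), ← abs_mul, hT', abs_neg, abs_mul,
        abs_of_nonneg ht.1]
    _ ≤ b * |∫ s in Ioo 0 t, f s * k s ∂μ| := by gcongr; exact ht.2

lemma eqOn_of_bvTransform_eqOn (hk : IntegrableOn k (Ioc 0 b) μ) (hδ : 0 < δ)
    (hw : ∀ t ∈ Icc 0 b, δ ≤ bvWeight r k μ t) (hf : ContinuousOn f (Icc 0 b))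
    (hg : ContinuousOn g (Icc 0 b))
    (hT : EqOn (bvTransform r k μ f) (bvTransform r k μ g) (Icc 0 b)) : EqOn f g (Icc 0 b) := by
  have hfk := integrableOn_Ioc_continuousOn_mul hk hf
  have hgk := integrableOn_Ioc_continuousOn_mul hk hg
  obtain ⟨B, hB⟩ := isCompact_Icc.exists_bound_of_continuousOn (hf.sub hg)
  intro t ht
  refine sub_eq_zero.1 (eq_zero_of_bvTransform_eq_zero (f := f - g) hk hδ hw
    (integrableOn_Ioc_continuousOn_mul hk (hf.sub hg)) hB (fun s hs => ?_) t ht)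
  have hsb : Ioc 0 s ⊆ Ioc 0 b := Ioc_subset_Ioc_right hs.2
  have hTs := hT hs
  simp only [bvTransform, Pi.sub_apply, sub_mul] at hTs ⊢
  rw [integral_sub (hfk.mono_set hsb) (hgk.mono_set hsb)]
  linear_combination hTs

lemma bvWeightLeft_mul_dualDensity (hk : IntegrableOn k (Ioc 0 b) μ) (hδ : 0 < δ)
    (hw : ∀ t ∈ Icc 0 b, δ ≤ bvWeight r k μ t) {s : ℝ} (hs : s ∈ Icc 0 b) :
    bvWeightLeft r k μ s * dualDensity r k μ s = -((bvWeight r k μ s)⁻¹ * k s) := by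
  have h : bvWeightLeft r k μ s ≠ 0 := (hδ.trans_le (le_bvWeightLeft hk hw hs)).ne'
  rw [dualDensity, mul_inv]
  field_simp

lemma abs_dualDensity_le {s : ℝ} (hδ : 0 < δ) (hw : δ ≤ bvWeight r k μ s)
    (hw' : δ ≤ bvWeightLeft r k μ s) : |dualDensity r k μ s| ≤ (δ * δ)⁻¹ * |k s| := by
  have hδδ : δ * δ ≤ bvWeight r k μ s * bvWeightLeft r k μ s :=
    mul_le_mul hw hw' hδ.le (hδ.le.trans hw)
  rw [dualDensity, abs_mul, abs_neg, abs_inv, abs_of_pos ((mul_pos hδ hδ).trans_le hδδ)]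
  gcongr

variable [SFinite μ]

lemma aestronglyMeasurable_bvWeight (hk : IntegrableOn k (Ioc 0 b) μ) :
    AEStronglyMeasurable (bvWeight r k μ) (μ.restrict (Ioc 0 b)) :=
  aestronglyMeasurable_const.sub
    (aestronglyMeasurable_setIntegral_Ioc (integrableOn_id_mul hk).aestronglyMeasurable)

lemma integrableOn_dualDensity (hk : IntegrableOn k (Ioc 0 b) μ) (hδ : 0 < δ)
    (hw : ∀ t ∈ Icc 0 b, δ ≤ bvWeight r k μ t) :
    IntegrableOn (dualDensity r k μ) (Ioc 0 b) μ := by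
  refine (hk.abs.const_mul (δ * δ)⁻¹).mono' (AEStronglyMeasurable.mul ?_ hk.1) ?_
  · exact ((aestronglyMeasurable_bvWeight hk).mul (aestronglyMeasurable_const.sub
      (aestronglyMeasurable_setIntegral_Ioo (integrableOn_id_mul hk).1))).inv₀.neg
  · filter_upwards [ae_restrict_mem measurableSet_Ioc] with s hs
    have hsI := Ioc_subset_Icc_self hs
    exact abs_dualDensity_le hδ (hw s hsI) (le_bvWeightLeft hk hw hsI)

lemma bvWeight_mul_setIntegral {κ : ℝ → ℝ} {t : ℝ} (hk : IntegrableOn k (Ioc 0 t) μ)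
    (hκ : IntegrableOn κ (Ioc 0 t) μ) :
    bvWeight r k μ t * ∫ s in Ioc 0 t, κ s ∂μ =
      ∫ s in Ioc 0 t, (bvWeightLeft r k μ s * κ s - s * k s * ∫ u in Ioc 0 s, κ u ∂μ) ∂μ := by
  have hsk := integrableOn_id_mul hk
  have hleft : IntegrableOn (fun s => bvWeightLeft r k μ s * κ s) (Ioc 0 t) μ := by
    refine ((hκ.const_mul r).sub (integrableOn_mul_setIntegral_Ioo hκ hsk)).congr ?_
    exact ae_of_all _ fun s => by simp only [bvWeightLeft, Pi.sub_apply]; ring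
  have hsum : (∫ s in Ioc 0 t, bvWeightLeft r k μ s * κ s ∂μ) =
      r * (∫ s in Ioc 0 t, κ s ∂μ) -
        ∫ s in Ioc 0 t, κ s * (∫ u in Ioo 0 s, u * k u ∂μ) ∂μ := by
    rw [← integral_const_mul, ← integral_sub (hκ.const_mul r)
      (integrableOn_mul_setIntegral_Ioo hκ hsk)]
    simp only [bvWeightLeft, sub_mul, mul_comm (κ _)]
  rw [integral_sub hleft (integrableOn_mul_setIntegral_Ioc hsk hκ), hsum, bvWeight, sub_mul,
    setIntegral_Ioc_mul_setIntegral_Ioc hsk hκ]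
  ring

lemma bvWeight_mul_sub_dual {t : ℝ} (hk : IntegrableOn k (Ioc 0 t) μ) (hδ : 0 < δ) (ht : 0 ≤ t)
    (hw : ∀ s ∈ Icc 0 t, δ ≤ bvWeight r k μ s)
    (hv : IntegrableOn (fun s => s * ((bvWeight r k μ s)⁻¹ -
      bvWeight r⁻¹ (dualDensity r k μ) μ s) * k s) (Ioc 0 t) μ) :
    bvWeight r k μ t * ((bvWeight r k μ t)⁻¹ - bvWeight r⁻¹ (dualDensity r k μ) μ t) =
      -∫ s in Ioc 0 t,
        s * ((bvWeight r k μ s)⁻¹ - bvWeight r⁻¹ (dualDensity r k μ) μ s) * k s ∂μ := by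
  have hr : r⁻¹ * r = 1 := by
    have hδr := hw 0 ⟨le_rfl, ht⟩
    rw [bvWeight_zero] at hδr
    exact inv_mul_cancel₀ (hδ.trans_le hδr).ne'
  have hwt : bvWeight r k μ t ≠ 0 := (hδ.trans_le (hw t ⟨ht, le_rfl⟩)).ne'
  have hsk := integrableOn_id_mul hk
  have hproduct := bvWeight_mul_setIntegral (r := r) hk
    (integrableOn_id_mul (integrableOn_dualDensity hk hδ hw))
  have hdual_eq (s : ℝ) : bvWeight r⁻¹ (dualDensity r k μ) μ s =
      r⁻¹ - ∫ u in Ioc 0 s, u * dualDensity r k μ u ∂μ := rfl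
  have hintegrand : EqOn (fun s => bvWeightLeft r k μ s * (s * dualDensity r k μ s) -
      s * k s * ∫ u in Ioc 0 s, u * dualDensity r k μ u ∂μ)
      (fun s => -(s * ((bvWeight r k μ s)⁻¹ - bvWeight r⁻¹ (dualDensity r k μ) μ s) * k s) -
        r⁻¹ * (s * k s)) (Ioc 0 t) := fun s hs => by
    have := bvWeightLeft_mul_dualDensity hk hδ hw (Ioc_subset_Icc_self hs)
    have hdual := hdual_eq s
    linear_combination s * this - s * k s * hdual
  rw [setIntegral_congr_fun measurableSet_Ioc hintegrand,
    integral_sub (Integrable.fun_neg hv) (hsk.const_mul r⁻¹), integral_neg, integral_const_mul]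
    at hproduct
  have hw_eq : bvWeight r k μ t = r - ∫ s in Ioc 0 t, s * k s ∂μ := rfl
  linear_combination mul_inv_cancel₀ hwt + hproduct - r⁻¹ * hw_eq - hr -
    bvWeight r k μ t * hdual_eq t

lemma bvWeight_dual (hk : IntegrableOn k (Ioc 0 b) μ) (hδ : 0 < δ)
    (hw : ∀ t ∈ Icc 0 b, δ ≤ bvWeight r k μ t) {t : ℝ} (ht : t ∈ Icc 0 b) :
    bvWeight r⁻¹ (dualDensity r k μ) μ t = (bvWeight r k μ t)⁻¹ := by
  set v : ℝ → ℝ := fun s => (bvWeight r k μ s)⁻¹ - bvWeight r⁻¹ (dualDensity r k μ) μ s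
  rcases ht.1.eq_or_lt with rfl | h0
  · rw [bvWeight_zero, bvWeight_zero]
  have hk' := integrableOn_dualDensity hk hδ hw
  obtain ⟨B, hB⟩ := exists_abs_bvWeight_le (r := r⁻¹) hk'
  have hvB : ∀ s ∈ Icc 0 b, |s * v s| ≤ b * (δ⁻¹ + B) := fun s hs => by
    have hδs := hw s hs
    rw [abs_mul, abs_of_nonneg hs.1]
    refine mul_le_mul hs.2 ((abs_sub _ _).trans (add_le_add ?_ (hB s hs))) (abs_nonneg _)
      (hs.1.trans hs.2)
    rw [abs_inv, abs_of_pos (hδ.trans_le hδs)]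
    exact inv_anti₀ hδ hδs
  have hvk : IntegrableOn (fun s => s * v s * k s) (Ioc 0 b) μ :=
    hk.bdd_mul (aestronglyMeasurable_id.mul ((aestronglyMeasurable_bvWeight hk).inv₀.sub
      (aestronglyMeasurable_bvWeight hk')))
      ((ae_restrict_mem measurableSet_Ioc).mono fun s hs => hvB s (Ioc_subset_Icc_self hs))
  have hzero : t * v t = 0 := by
    refine eq_zero_of_bvTransform_eq_zero hk hδ hw hvk hvB (fun s hs => ?_) t ht
    have hsb : Ioc 0 s ⊆ Ioc 0 b := Ioc_subset_Ioc_right hs.2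
    have := bvWeight_mul_sub_dual (hk.mono_set hsb) hδ hs.1
      (fun u hu => hw u ⟨hu.1, hu.2.trans hs.2⟩) (hvk.mono_set hsb)
    rw [bvTransform]
    linear_combination s * this
  exact (sub_eq_zero.1 ((mul_eq_zero.1 hzero).resolve_left h0.ne')).symm

lemma setIntegral_bvTransform_dual_mul (hk : IntegrableOn k (Ioc 0 b) μ) (hδ : 0 < δ)
    (hw : ∀ t ∈ Icc 0 b, δ ≤ bvWeight r k μ t) (hg : ContinuousOn g (Icc 0 b)) {t : ℝ}
    (ht : t ∈ Icc 0 b) :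
    ∫ s in Ioc 0 t, bvTransform r⁻¹ (dualDensity r k μ) μ g s * k s ∂μ =
      -(bvWeight r k μ t * ∫ s in Ioc 0 t, g s * dualDensity r k μ s ∂μ) := by
  have htb : Ioc 0 t ⊆ Ioc 0 b := Ioc_subset_Ioc_right ht.2
  have hgk' := integrableOn_Ioc_continuousOn_mul (integrableOn_dualDensity hk hδ hw) hg
  rw [bvWeight_mul_setIntegral (hk.mono_set htb) (hgk'.mono_set htb), ← integral_neg]
  refine setIntegral_congr_fun measurableSet_Ioc fun s hs => ?_
  have hsb := Ioc_subset_Icc_self (htb hs)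
  have := bvWeightLeft_mul_dualDensity hk hδ hw hsb
  simp only [bvTransform, bvWeight_dual hk hδ hw hsb]
  linear_combination g s * this

lemma bvTransform_bvTransform_dual (hk : IntegrableOn k (Ioc 0 b) μ) (hδ : 0 < δ)
    (hw : ∀ t ∈ Icc 0 b, δ ≤ bvWeight r k μ t) (hg : ContinuousOn g (Icc 0 b)) {t : ℝ}
    (ht : t ∈ Icc 0 b) :
    bvTransform r k μ (bvTransform r⁻¹ (dualDensity r k μ) μ g) t = g t := by
  have hwt : bvWeight r k μ t * (bvWeight r k μ t)⁻¹ = 1 :=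
    mul_inv_cancel₀ (hδ.trans_le (hw t ht)).ne'
  rw [bvTransform, setIntegral_bvTransform_dual_mul hk hδ hw hg ht, bvTransform,
    bvWeight_dual hk hδ hw ht]
  linear_combination g t * hwt

end HalfLine

section HalfOpen

variable {μ : Measure ℝ} {r a b : ℝ} {f g k : ℝ → ℝ}

lemma continuousOn_Ico_of_forall_Icc {h : ℝ → ℝ} {c : ℝ}
    (hh : ∀ b ∈ Ico c a, ContinuousOn h (Icc c b)) : ContinuousOn h (Ico c a) := fun t ht => by
  obtain ⟨b, htb, hba⟩ := exists_between ht.2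
  refine (hh b ⟨ht.1.trans htb.le, hba⟩ t ⟨ht.1, htb.le⟩).mono_of_mem_nhdsWithin ?_
  filter_upwards [self_mem_nhdsWithin, mem_nhdsWithin_of_mem_nhds (Iio_mem_nhds htb)] with s hs hsb
  exact ⟨hs.1, le_of_lt hsb⟩

lemma continuousOn_Ico_bvTransform (hk : ∀ b ∈ Ico 0 a, IntegrableOn k (Ioc 0 b) μ)
    (hf : ContinuousOn f (Ico 0 a)) : ContinuousOn (bvTransform r k μ f) (Ico 0 a) :=
  continuousOn_Ico_of_forall_Icc fun b hb =>
    continuousOn_bvTransform (hk b hb) (hf.mono (Icc_subset_Ico_right hb.2))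

/-- The class `BV₊` on a half-open interval `[0, a)`, for the pair with initial value `R(0) = r`
and measure `k dμ`. -/
structure HalfBVplus (r : ℝ) (k : ℝ → ℝ) (μ : Measure ℝ) (a : ℝ) : Prop where
  integrableOn : IntegrableOn k (Ioo 0 a) μ
  sign : (∀ s ∈ Ioo 0 a, 0 ≤ k s) ∨ ∀ s ∈ Ioo 0 a, k s ≤ 0
  bvWeight_pos : ∀ t ∈ Ico 0 a, 0 < bvWeight r k μ t

namespace HalfBVplus

lemma integrableOn_Ioc (h : HalfBVplus r k μ a) (hb : b ∈ Ico 0 a) :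
    IntegrableOn k (Ioc 0 b) μ :=
  h.integrableOn.mono_set fun _ hs => ⟨hs.1, hs.2.trans_lt hb.2⟩

lemma integrableOn_id_mul (h : HalfBVplus r k μ a) :
    IntegrableOn (fun s => s * k s) (Ioo 0 a) μ :=
  h.integrableOn.continuousOn_mul_of_subset (continuousOn_id (s := Icc 0 a)) isCompact_Icc
    measurableSet_Ioo Ioo_subset_Icc_self

lemma sign_id_mul (h : HalfBVplus r k μ a) :
    (∀ s ∈ Ioo 0 a, 0 ≤ s * k s) ∨ ∀ s ∈ Ioo 0 a, s * k s ≤ 0 :=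
  h.sign.imp (fun h0 s hs => mul_nonneg hs.1.le (h0 s hs))
    fun h0 s hs => mul_nonpos_of_nonneg_of_nonpos hs.1.le (h0 s hs)

lemma pos (h : HalfBVplus r k μ a) (ha : 0 < a) : 0 < r := by
  simpa only [bvWeight_zero] using h.bvWeight_pos 0 ⟨le_rfl, ha⟩

lemma min_bvWeight_le (h : HalfBVplus r k μ a) {t : ℝ} (hb : b ∈ Ico 0 a) (ht : t ≤ b) :
    min r (bvWeight r k μ b) ≤ bvWeight r k μ t :=
  have hba : Ioc 0 b ⊆ Ioo 0 a := fun _ hs => ⟨hs.1, hs.2.trans_lt hb.2⟩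
  min_sub_setIntegral_le (Ioc_subset_Ioc_right ht) measurableSet_Ioc
    (h.integrableOn_id_mul.mono_set hba)
    (h.sign_id_mul.imp (fun h0 s hs => h0 s (hba hs)) fun h0 s hs => h0 s (hba hs))

lemma min_bvWeightLeft_le (h : HalfBVplus r k μ a) {t : ℝ} (ht : t < a) :
    min r (bvWeightLeft r k μ a) ≤ bvWeight r k μ t :=
  min_sub_setIntegral_le (fun _ hs => ⟨hs.1, hs.2.trans_lt ht⟩) measurableSet_Ioo
    h.integrableOn_id_mul h.sign_id_mul

lemma exists_pos_forall_le_bvWeight (h : HalfBVplus r k μ a) (hb : b ∈ Ico 0 a) :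
    ∃ δ > 0, ∀ t ∈ Icc 0 b, δ ≤ bvWeight r k μ t :=
  ⟨min r (bvWeight r k μ b), lt_min (h.pos (hb.1.trans_lt hb.2)) (h.bvWeight_pos b hb),
    fun _ ht => h.min_bvWeight_le hb ht.2⟩

lemma bvWeightLeft_nonneg (h : HalfBVplus r k μ a) (ha : 0 < a) : 0 ≤ bvWeightLeft r k μ a := by
  refine ge_of_tendsto (tendsto_bvWeight_nhdsLT h.integrableOn_id_mul) ?_
  filter_upwards [Ioo_mem_nhdsLT ha] with t ht using (h.bvWeight_pos t ⟨ht.1.le, ht.2⟩).le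

lemma eqOn_of_bvTransform_eqOn (h : HalfBVplus r k μ a) (hf : ContinuousOn f (Ico 0 a))
    (hg : ContinuousOn g (Ico 0 a))
    (hT : EqOn (bvTransform r k μ f) (bvTransform r k μ g) (Ico 0 a)) : EqOn f g (Ico 0 a) := by
  intro t ht
  have hta : Icc 0 t ⊆ Ico 0 a := Icc_subset_Ico_right ht.2
  obtain ⟨δ, hδ, hw⟩ := h.exists_pos_forall_le_bvWeight ht
  exact _root_.eqOn_of_bvTransform_eqOn (h.integrableOn_Ioc ht) hδ hw (hf.mono hta) (hg.mono hta)
    (hT.mono hta) ⟨ht.1, le_rfl⟩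

lemma nonneg_of_bvWeightLeft_eq_zero (h : HalfBVplus r k μ a) (ha : 0 < a)
    (hwa : bvWeightLeft r k μ a = 0) : ∀ s ∈ Ioo 0 a, 0 ≤ k s := by
  refine h.sign.resolve_right fun h0 => ?_
  have hint : ∫ s in Ioo 0 a, s * k s ∂μ ≤ 0 := setIntegral_nonpos measurableSet_Ioo
    fun s hs => mul_nonpos_of_nonneg_of_nonpos hs.1.le (h0 s hs)
  rw [bvWeightLeft] at hwa
  linarith [h.pos ha]

lemma dualDensity_nonpos (h : HalfBVplus r k μ a) {s : ℝ} (hs : s ∈ Ioo 0 a) (hk : 0 ≤ k s) :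
    dualDensity r k μ s ≤ 0 := by
  have hsI : s ∈ Ico 0 a := Ioo_subset_Ico_self hs
  obtain ⟨δ, hδ, hw⟩ := h.exists_pos_forall_le_bvWeight hsI
  have hleft := hδ.trans_le (le_bvWeightLeft (h.integrableOn_Ioc hsI) hw ⟨hs.1.le, le_rfl⟩)
  exact mul_nonpos_of_nonpos_of_nonneg (neg_nonpos.2 (inv_pos.2
    (mul_pos (h.bvWeight_pos s hsI) hleft)).le) hk

lemma tendsto_inv_bvWeight_atTop (h : HalfBVplus r k μ a) (ha : 0 < a)
    (hwa : bvWeightLeft r k μ a = 0) :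
    Tendsto (fun t => (bvWeight r k μ t)⁻¹) (𝓝[<] a) atTop := by
  have hw : Tendsto (bvWeight r k μ) (𝓝[<] a) (𝓝 0) :=
    hwa ▸ tendsto_bvWeight_nhdsLT h.integrableOn_id_mul
  refine (tendsto_nhdsWithin_iff.2 ⟨hw, ?_⟩).inv_tendsto_nhdsGT_zero
  filter_upwards [Ioo_mem_nhdsLT ha] with t ht using h.bvWeight_pos t (Ioo_subset_Ico_self ht)

lemma tendsto_bvWeight_mul_inv_sub_inv (h : HalfBVplus r k μ a) (ha : 0 < a)
    (hwa : bvWeightLeft r k μ a = 0) :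
    Tendsto (fun t => bvWeight r k μ t * ((bvWeight r k μ t)⁻¹ - r⁻¹)) (𝓝[<] a) (𝓝 1) := by
  have hw : Tendsto (fun t => 1 - bvWeight r k μ t * r⁻¹) (𝓝[<] a) (𝓝 1) := by
    simpa [hwa] using
      ((tendsto_bvWeight_nhdsLT (r := r) h.integrableOn_id_mul).mul_const r⁻¹).const_sub 1
  refine hw.congr' ?_
  filter_upwards [Ioo_mem_nhdsLT ha] with t ht
  rw [mul_sub, mul_inv_cancel₀ (h.bvWeight_pos t (Ioo_subset_Ico_self ht)).ne']

variable [SFinite μ]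

lemma integrableOn_dualDensity (h : HalfBVplus r k μ a) (hb : b ∈ Ico 0 a) :
    IntegrableOn (dualDensity r k μ) (Ioc 0 b) μ := by
  obtain ⟨δ, hδ, hw⟩ := h.exists_pos_forall_le_bvWeight hb
  exact _root_.integrableOn_dualDensity (h.integrableOn_Ioc hb) hδ hw

lemma bvWeight_dual (h : HalfBVplus r k μ a) (hb : b ∈ Ico 0 a) :
    bvWeight r⁻¹ (dualDensity r k μ) μ b = (bvWeight r k μ b)⁻¹ := by
  obtain ⟨δ, hδ, hw⟩ := h.exists_pos_forall_le_bvWeight hb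
  exact _root_.bvWeight_dual (h.integrableOn_Ioc hb) hδ hw ⟨hb.1, le_rfl⟩

lemma setIntegral_bvTransform_dual_mul (h : HalfBVplus r k μ a) (hg : ContinuousOn g (Ico 0 a))
    (hb : b ∈ Ico 0 a) :
    ∫ s in Ioc 0 b, bvTransform r⁻¹ (dualDensity r k μ) μ g s * k s ∂μ =
      -(bvWeight r k μ b * ∫ s in Ioc 0 b, g s * dualDensity r k μ s ∂μ) := by
  obtain ⟨δ, hδ, hw⟩ := h.exists_pos_forall_le_bvWeight hb
  exact _root_.setIntegral_bvTransform_dual_mul (h.integrableOn_Ioc hb) hδ hw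
    (hg.mono (Icc_subset_Ico_right hb.2)) ⟨hb.1, le_rfl⟩

lemma bvTransform_bvTransform_dual (h : HalfBVplus r k μ a) (hg : ContinuousOn g (Ico 0 a)) :
    EqOn (bvTransform r k μ (bvTransform r⁻¹ (dualDensity r k μ) μ g)) g (Ico 0 a) := by
  intro t ht
  obtain ⟨δ, hδ, hw⟩ := h.exists_pos_forall_le_bvWeight ht
  exact _root_.bvTransform_bvTransform_dual (h.integrableOn_Ioc ht) hδ hw
    (hg.mono (Icc_subset_Ico_right ht.2)) ⟨ht.1, le_rfl⟩

lemma integrableOn_Ioo_dualDensity (h : HalfBVplus r k μ a) (ha : 0 < a)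
    (hwa : 0 < bvWeightLeft r k μ a) : IntegrableOn (dualDensity r k μ) (Ioo 0 a) μ := by
  have hlocal : LocallyIntegrableOn (dualDensity r k μ) (Ioo 0 a) μ := fun t ht => by
    obtain ⟨b, htb, hba⟩ := exists_between ht.2
    exact ⟨Ioc 0 b, mem_nhdsWithin_of_mem_nhds (Ioc_mem_nhds ht.1 htb),
      h.integrableOn_dualDensity ⟨(ht.1.trans htb).le, hba⟩⟩
  set δ := min r (bvWeightLeft r k μ a)
  have hδ : 0 < δ := lt_min (h.pos ha) hwa
  refine (h.integrableOn.abs.const_mul (δ * δ)⁻¹).mono' hlocal.aestronglyMeasurable ?_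
  filter_upwards [ae_restrict_mem measurableSet_Ioo] with s hs
  have hsI : s ∈ Ico 0 a := Ioo_subset_Ico_self hs
  exact abs_dualDensity_le hδ (h.min_bvWeightLeft_le hs.2)
    (le_bvWeightLeft (h.integrableOn_Ioc hsI)
      (fun t ht => h.min_bvWeightLeft_le (ht.2.trans_lt hs.2)) ⟨hs.1.le, le_rfl⟩)

lemma tendsto_bvWeight_mul_setIntegral_of_pos (h : HalfBVplus r k μ a) (ha : 0 < a)
    (hwa : 0 < bvWeightLeft r k μ a) (hg : ContinuousOn g (Icc 0 a)) :
    Tendsto (fun t => bvWeight r k μ t * ∫ s in Ioc 0 t, g s * dualDensity r k μ s ∂μ) (𝓝[<] a)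
      (𝓝 (bvWeightLeft r k μ a * ∫ s in Ioo 0 a, g s * dualDensity r k μ s ∂μ)) :=
  (tendsto_bvWeight_nhdsLT h.integrableOn_id_mul).mul
    (tendsto_setIntegral_Ioc_nhdsLT
      ((h.integrableOn_Ioo_dualDensity ha hwa).continuousOn_mul_of_subset hg isCompact_Icc
        measurableSet_Ioo Ioo_subset_Icc_self))

lemma setIntegral_neg_id_mul_dualDensity (h : HalfBVplus r k μ a) (hb : b ∈ Ico 0 a) :
    ∫ s in Ioc 0 b, -(s * dualDensity r k μ s) ∂μ = (bvWeight r k μ b)⁻¹ - r⁻¹ := by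
  rw [← h.bvWeight_dual hb, bvWeight, integral_neg]
  ring

lemma isLittleO_setIntegral_dualDensity (h : HalfBVplus r k μ a) (ha : 0 < a)
    (hwa : bvWeightLeft r k μ a = 0) (hg : ContinuousOn g (Icc 0 a)) (hga : g a = 0) :
    (fun t => ∫ s in Ioc 0 t, g s * dualDensity r k μ s ∂μ) =o[𝓝[<] a]
      fun t => (bvWeight r k μ t)⁻¹ - r⁻¹ := by
  have heq : (fun t => ∫ s in Ioc 0 t, -(s * dualDensity r k μ s) ∂μ) =ᶠ[𝓝[<] a]
      fun t => (bvWeight r k μ t)⁻¹ - r⁻¹ := by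
    filter_upwards [Ioo_mem_nhdsLT ha] with t ht
      using h.setIntegral_neg_id_mul_dualDensity (Ioo_subset_Ico_self ht)
  have hg0 : Tendsto (fun s => g s / s) (𝓝[<] a) (𝓝 0) := by
    have hga' : Tendsto g (𝓝[<] a) (𝓝 (g a)) :=
      (hg a ⟨ha.le, le_rfl⟩).mono_left (nhdsWithin_le_iff.2 (Icc_mem_nhdsLT ha))
    simpa [hga, Pi.div_def] using hga'.div (tendsto_id.mono_left nhdsWithin_le_nhds) ha.ne'
  have hgo : g =o[𝓝[<] a] fun s => s := by
    refine (Asymptotics.isLittleO_iff_tendsto' ?_).2 hg0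
    filter_upwards [Ioo_mem_nhdsLT ha] with s hs h0 using absurd h0 hs.1.ne'
  refine (isLittleO_setIntegral_Ioc ha (fun t ht => ?_) (fun t ht => ?_) (fun t ht => ?_)
    (hgo.mul_isBigO (Asymptotics.isBigO_refl _ _)).neg_right ?_).trans_eventuallyEq heq
  · exact integrableOn_Ioc_continuousOn_mul (h.integrableOn_dualDensity (Ioo_subset_Ico_self ht))
      (hg.mono (Icc_subset_Icc_right ht.2.le))
  · exact (_root_.integrableOn_id_mul (h.integrableOn_dualDensity (Ioo_subset_Ico_self ht))).neg
  · exact neg_nonneg.2 (mul_nonpos_of_nonneg_of_nonpos ht.1.le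
      (h.dualDensity_nonpos ht (h.nonneg_of_bvWeightLeft_eq_zero ha hwa t ht)))
  · refine Tendsto.congr' heq.symm ?_
    simpa only [sub_eq_add_neg] using
      tendsto_atTop_add_const_right _ (-r⁻¹) (h.tendsto_inv_bvWeight_atTop ha hwa)

lemma tendsto_bvWeight_mul_setIntegral_of_eq_zero (h : HalfBVplus r k μ a) (ha : 0 < a)
    (hwa : bvWeightLeft r k μ a = 0) (hg : ContinuousOn g (Icc 0 a)) :
    Tendsto (fun t => bvWeight r k μ t * ∫ s in Ioc 0 t, g s * dualDensity r k μ s ∂μ) (𝓝[<] a)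
      (𝓝 (-(g a / a))) := by
  have hone := h.tendsto_bvWeight_mul_inv_sub_inv ha hwa
  -- On linear functions the integral is explicit, so subtract the one agreeing with `g` at `a`.
  have hg₀ : ContinuousOn (fun s => g s - g a / a * s) (Icc 0 a) := hg.sub (by fun_prop)
  have hsmall := (Asymptotics.isBigO_refl (bvWeight r k μ) (𝓝[<] a)).mul_isLittleO
    (h.isLittleO_setIntegral_dualDensity ha hwa hg₀ (by field_simp; ring))
  have hzero := (Asymptotics.isLittleO_one_iff ℝ).1 (hsmall.trans_isBigO (hone.isBigO_one ℝ))
  have hlim := hzero.sub (hone.const_mul (g a / a))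
  rw [zero_sub, mul_one] at hlim
  refine hlim.congr' ?_
  filter_upwards [Ioo_mem_nhdsLT ha] with t ht
  have htI : t ∈ Ico 0 a := Ioo_subset_Ico_self ht
  have hk' := h.integrableOn_dualDensity htI
  rw [← h.setIntegral_neg_id_mul_dualDensity htI, integral_neg]
  simp only [sub_mul, mul_assoc]
  rw [integral_sub (integrableOn_Ioc_continuousOn_mul hk' (hg.mono (Icc_subset_Icc_right ht.2.le)))
    ((_root_.integrableOn_id_mul hk').const_mul _), integral_const_mul]
  ring

lemma exists_bvTransform_eq (h : HalfBVplus r k μ a) (ha : 0 < a) (hg : ContinuousOn g (Icc 0 a)) :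
    ∃ f : ℝ → ℝ, ContinuousOn f (Ico 0 a) ∧ EqOn (bvTransform r k μ f) g (Ico 0 a) ∧
      ∃ L, Tendsto (fun t => ∫ s in Ioc 0 t, f s * k s ∂μ) (𝓝[<] a) (𝓝 L) := by
  have hgI := hg.mono Ico_subset_Icc_self
  obtain ⟨L, hL⟩ : ∃ L, Tendsto (fun t => bvWeight r k μ t *
      ∫ s in Ioc 0 t, g s * dualDensity r k μ s ∂μ) (𝓝[<] a) (𝓝 L) := by
    rcases (h.bvWeightLeft_nonneg ha).eq_or_lt with hwa | hwa
    · exact ⟨_, h.tendsto_bvWeight_mul_setIntegral_of_eq_zero ha hwa.symm hg⟩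
    · exact ⟨_, h.tendsto_bvWeight_mul_setIntegral_of_pos ha hwa hg⟩
  refine ⟨bvTransform r⁻¹ (dualDensity r k μ) μ g,
    continuousOn_Ico_bvTransform (fun b => h.integrableOn_dualDensity) hgI,
    h.bvTransform_bvTransform_dual hgI, -L, hL.neg.congr' ?_⟩
  filter_upwards [Ioo_mem_nhdsLT ha] with t ht
  exact (h.setIntegral_bvTransform_dual_mul hgI (Ioo_subset_Ico_self ht)).symm

end HalfBVplus

end HalfOpen

section Interval

variable {h : ℝ → ℝ} {am ap : ℝ}

lemma continuousOn_Ioo_of_Ico_neg (hp : ContinuousOn h (Ico 0 ap))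
    (hm : ContinuousOn (fun s => h (-s)) (Ico 0 (-am))) : ContinuousOn h (Ioo am ap) := by
  have hm' : ContinuousOn h (Ioc am 0) := by
    have := hm.comp (s := Ioc am 0) continuousOn_neg
      fun s hs => ⟨neg_nonneg.2 hs.2, neg_lt_neg hs.1⟩
    simpa [Function.comp_def] using this
  intro t ht
  rcases lt_trichotomy t 0 with h0 | rfl | h0
  · exact ((hm' t ⟨ht.1, h0.le⟩).continuousAt (Ioc_mem_nhds ht.1 h0)).continuousWithinAt
  · refine ((hm' 0 ⟨ht.1, le_rfl⟩).union (hp 0 ⟨le_rfl, ht.2⟩)).mono fun s hs => ?_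
    exact (le_total s 0).imp (fun h => ⟨hs.1, h⟩) fun h => ⟨h, hs.2⟩
  · exact ((hp t ⟨h0.le, ht.2⟩).continuousAt (Ico_mem_nhds h0 ht.2)).continuousWithinAt

lemma exists_linear_extension {Lm Lp : ℝ} (ham : am < 0) (hap : 0 < ap)
    (hc : ContinuousOn h (Ioo am ap)) (hm : Tendsto h (𝓝[>] am) (𝓝 Lm))
    (hp : Tendsto h (𝓝[<] ap) (𝓝 Lp)) :
    ∃ g : ℝ → ℝ, Continuous g ∧ EqOn g h (Ioo am ap) ∧
      (∀ t, ap ≤ t → g t = g ap / ap * t) ∧ ∀ t ≤ am, g t = g am / am * t := by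
  have hab : am ≤ ap := (ham.trans hap).le
  set F := extendFrom (Ioo am ap) h
  have hF : ContinuousOn F (Icc am ap) := continuousOn_Icc_extendFrom_Ioo hc hm hp
  set e : ℝ → ℝ := IccExtend hab ((Icc am ap).domRestrict F)
  have he : Continuous e := hF.domRestrict.Icc_extend'
  let g : ℝ → ℝ := fun t => e t * max (max (t / am) (t / ap)) 1
  have hgp (t : ℝ) (ht : ap ≤ t) : g t = F ap * (t / ap) := by
    have hle : t / am ≤ t / ap :=
      (div_nonpos_of_nonneg_of_nonpos (hap.le.trans ht) ham.le).trans
        (div_nonneg (hap.le.trans ht) hap.le)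
    simp only [g, e, IccExtend_of_right_le hab _ ht, max_eq_right hle,
      max_eq_left ((one_le_div hap).2 ht), domRestrict_apply]
  have hgm (t : ℝ) (ht : t ≤ am) : g t = F am * (t / am) := by
    have hle : t / ap ≤ t / am :=
      (div_nonpos_of_nonpos_of_nonneg (ht.trans ham.le) hap.le).trans
        (div_nonneg_of_nonpos (ht.trans ham.le) ham.le)
    simp only [g, e, IccExtend_of_le_left hab _ ht, max_eq_left hle,
      max_eq_left ((one_le_div_of_neg ham).2 ht), domRestrict_apply]
  refine ⟨g, by fun_prop, fun t ht => ?_, fun t ht => ?_, fun t ht => ?_⟩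
  · have hle : max (t / am) (t / ap) ≤ 1 :=
      max_le ((div_le_one_of_neg ham).2 ht.1.le) ((div_le_one hap).2 ht.2.le)
    simp only [g, e, IccExtend_of_mem hab _ (Ioo_subset_Icc_self ht), domRestrict_apply,
      max_eq_right hle, mul_one]
    exact extendFrom_extends hc t ht
  · rw [hgp t ht, hgp ap le_rfl]
    field_simp
  · rw [hgm t ht, hgm am le_rfl]
    field_simp

lemma mapsTo_neg_Ico_Ioo (hap : 0 < ap) : MapsTo Neg.neg (Ico 0 (-am)) (Ioo am ap) :=
  fun _ ht => ⟨lt_neg.1 ht.2, (neg_nonpos.2 ht.1).trans_lt hap⟩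

lemma exists_eq_of_nonneg_of_neg {fp fm : ℝ → ℝ} (h0 : fp 0 = fm 0) :
    ∃ f : ℝ → ℝ, (∀ t, 0 ≤ t → f t = fp t) ∧ ∀ t, 0 ≤ t → f (-t) = fm t := by
  refine ⟨fun t => if 0 ≤ t then fp t else fm (-t), fun t ht => if_pos ht, fun t ht => ?_⟩
  rcases ht.eq_or_lt with rfl | ht
  · simp [h0]
  · simp [ht.not_ge]

end Interval

lemma bvTransform_congr {μ : Measure ℝ} {r t : ℝ} {f g k : ℝ → ℝ} (ht : 0 ≤ t)
    (h : EqOn f g (Icc 0 t)) : bvTransform r k μ f t = bvTransform r k μ g t := by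
  have hint : ∫ s in Ioc 0 t, f s * k s ∂μ = ∫ s in Ioc 0 t, g s * k s ∂μ :=
    setIntegral_congr_fun measurableSet_Ioc fun s hs => by simp only [h (Ioc_subset_Icc_self hs)]
  rw [bvTransform, bvTransform, hint, h ⟨ht, le_rfl⟩]

lemma setIntegral_Ioc_map_neg (μ : Measure ℝ) (f : ℝ → ℝ) (t : ℝ) :
    ∫ s in Ioc 0 t, f (-s) ∂μ.map Neg.neg = ∫ s in Ico (-t) 0, f s ∂μ := by
  rw [(MeasurableEquiv.neg ℝ).measurableEmbedding.setIntegral_map (f := Neg.neg)]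
  simp

namespace NormBV0

variable {P : NormBV0} {μ : Measure ℝ} {σ am ap : ℝ} {f g : ℝ → ℝ}

lemma BVplusOn.exists_integ_eq (h : P.BVplusOn am ap) :
    ∃ (μ : Measure ℝ) (σ : ℝ), IsFiniteMeasure μ ∧
      ∀ S f, P.integ S f = ∫ s in S, f s * σ ∂μ := by
  obtain ⟨hp, hm, -, h0 | h0⟩ := h
  · refine ⟨P.νp, 1, ⟨?_⟩, fun S f => by simp [integ, h0]⟩
    rw [← measure_add_measure_compl (measurableSet_Ioo (a := (-1 : ℝ)) (b := 1)), P.supp_p,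
      add_zero]
    exact hp.lt_top
  · refine ⟨P.νm, -1, ⟨?_⟩, fun S f => by simp [integ, h0, integral_neg]⟩
    rw [← measure_add_measure_compl (measurableSet_Ioo (a := (-1 : ℝ)) (b := 1)), P.supp_m,
      add_zero]
    exact hm.lt_top

lemma T_zero (P : NormBV0) (f : ℝ → ℝ) : P.T f 0 = P.R 0 * f 0 := by simp [T]

lemma T_of_nonpos {t : ℝ} (ht : t ≤ 0) : P.T f t = P.R t * f t - t * P.integ (Ico t 0) f :=
  if_neg ht.not_gt

lemma T_of_nonneg {t : ℝ} (ht : 0 ≤ t) : P.T f t = P.R t * f t + t * P.integ (Ioc 0 t) f := by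
  rcases ht.eq_or_lt with rfl | h0
  · simp [T]
  · exact if_pos h0

lemma integ_Ico_neg (hμ : ∀ S f, P.integ S f = ∫ s in S, f s * σ ∂μ) (f : ℝ → ℝ) (t : ℝ) :
    P.integ (Ico (-t) 0) f = ∫ s in Ioc 0 t, f (-s) * σ ∂μ.map Neg.neg := by
  rw [hμ, setIntegral_Ioc_map_neg μ fun s => f s * σ]

lemma R_eq_bvWeight (hμ : ∀ S f, P.integ S f = ∫ s in S, f s * σ ∂μ) {t : ℝ}
    (ht : t ∈ Ico (0 : ℝ) 1) : P.R t = bvWeight (P.R 0) (fun _ => σ) μ t := by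
  rw [bvWeight, ← hμ]
  exact P.fund_pos t ht

lemma R_neg_eq_bvWeight (hμ : ∀ S f, P.integ S f = ∫ s in S, f s * σ ∂μ) {t : ℝ}
    (ht : t ∈ Ico (0 : ℝ) 1) :
    P.R (-t) = bvWeight (P.R 0) (fun _ => σ) (μ.map Neg.neg) t := by
  have hR : P.R (-t) = P.R 0 + P.integ (Ico (-t) 0) fun s => s :=
    P.fund_neg (-t) ⟨neg_lt_neg ht.2, neg_nonpos.2 ht.1⟩
  simp only [hR, integ_Ico_neg hμ, bvWeight, neg_mul, integral_neg, sub_eq_add_neg]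

lemma T_eq_bvTransform (hμ : ∀ S f, P.integ S f = ∫ s in S, f s * σ ∂μ) (f : ℝ → ℝ) {t : ℝ}
    (ht : t ∈ Ico (0 : ℝ) 1) : P.T f t = bvTransform (P.R 0) (fun _ => σ) μ f t := by
  rw [T_of_nonneg ht.1, bvTransform, R_eq_bvWeight hμ ht, hμ]

lemma T_neg_eq_bvTransform (hμ : ∀ S f, P.integ S f = ∫ s in S, f s * σ ∂μ) (f : ℝ → ℝ) {t : ℝ}
    (ht : t ∈ Ico (0 : ℝ) 1) :
    P.T f (-t) = bvTransform (P.R 0) (fun _ => σ) (μ.map Neg.neg) (fun s => f (-s)) t := by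
  rw [T_of_nonpos (neg_nonpos.2 ht.1), bvTransform, R_neg_eq_bvWeight hμ ht, integ_Ico_neg hμ]
  ring

lemma halfBVplus [IsFiniteMeasure μ] (hμ : ∀ S f, P.integ S f = ∫ s in S, f s * σ ∂μ)
    (hap1 : ap ≤ 1) (hR : ∀ t ∈ Ico 0 ap, 0 < P.R t) : HalfBVplus (P.R 0) (fun _ => σ) μ ap where
  integrableOn := integrable_const σ
  sign := (le_total 0 σ).imp (fun h _ _ => h) fun h _ _ => h
  bvWeight_pos t ht := R_eq_bvWeight hμ ⟨ht.1, ht.2.trans_le hap1⟩ ▸ hR t ht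

lemma halfBVplus_neg [IsFiniteMeasure μ] (hμ : ∀ S f, P.integ S f = ∫ s in S, f s * σ ∂μ)
    (ham1 : -1 ≤ am) (hR : ∀ t ∈ Ico 0 (-am), 0 < P.R (-t)) :
    HalfBVplus (P.R 0) (fun _ => σ) (μ.map Neg.neg) (-am) where
  integrableOn := integrable_const σ
  sign := (le_total 0 σ).imp (fun h _ _ => h) fun h _ _ => h
  bvWeight_pos t ht := R_neg_eq_bvWeight hμ ⟨ht.1, by linarith [ht.2]⟩ ▸ hR t ht

lemma BVplusOn.exists_halfBVplus (h : P.BVplusOn am ap) (ham1 : -1 ≤ am) (ham : am < 0)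
    (hap : 0 < ap) (hap1 : ap ≤ 1) : ∃ (μ : Measure ℝ) (σ : ℝ), IsFiniteMeasure μ ∧
      (∀ S f, P.integ S f = ∫ s in S, f s * σ ∂μ) ∧
      HalfBVplus (P.R 0) (fun _ => σ) μ ap ∧
      HalfBVplus (P.R 0) (fun _ => σ) (μ.map Neg.neg) (-am) := by
  obtain ⟨μ, σ, hfin, hμ⟩ := h.exists_integ_eq
  exact ⟨μ, σ, hfin, hμ,
    halfBVplus hμ hap1 fun t ht => h.2.2.1 t ⟨ham.trans_le ht.1, ht.2⟩,
    halfBVplus_neg hμ ham1 fun t ht => h.2.2.1 _ (mapsTo_neg_Ico_Ioo hap ht)⟩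

lemma BVplusOn.continuousOn_T (h : P.BVplusOn am ap) (ham1 : -1 ≤ am) (ham : am < 0) (hap : 0 < ap)
    (hap1 : ap ≤ 1) (hf : ContinuousOn f (Ioo am ap)) : ContinuousOn (P.T f) (Ioo am ap) := by
  obtain ⟨μ, σ, _, hμ, hp, hm⟩ := h.exists_halfBVplus ham1 ham hap hap1
  refine continuousOn_Ioo_of_Ico_neg ?_ ?_
  · refine (continuousOn_Ico_bvTransform (r := P.R 0) (fun b => hp.integrableOn_Ioc)
      (hf.mono (Ico_subset_Ioo_left ham))).congr fun t ht => ?_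
    exact T_eq_bvTransform hμ f ⟨ht.1, ht.2.trans_le hap1⟩
  · refine (continuousOn_Ico_bvTransform (r := P.R 0) (fun b => hm.integrableOn_Ioc) <|
      hf.comp continuousOn_neg (mapsTo_neg_Ico_Ioo hap)).congr fun t ht => ?_
    exact T_neg_eq_bvTransform hμ f ⟨ht.1, ht.2.trans_le (neg_le.1 ham1)⟩

lemma BVplusOn.eqOn_of_T_eqOn (h : P.BVplusOn am ap) (ham1 : -1 ≤ am) (ham : am < 0) (hap : 0 < ap)
    (hap1 : ap ≤ 1) (hf : ContinuousOn f (Ioo am ap)) (hg : ContinuousOn g (Ioo am ap))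
    (hT : EqOn (P.T f) (P.T g) (Ioo am ap)) : EqOn f g (Ioo am ap) := by
  obtain ⟨μ, σ, _, hμ, hp, hm⟩ := h.exists_halfBVplus ham1 ham hap hap1
  have hright : EqOn f g (Ico 0 ap) := by
    refine hp.eqOn_of_bvTransform_eqOn (hf.mono (Ico_subset_Ioo_left ham))
      (hg.mono (Ico_subset_Ioo_left ham)) fun t ht => ?_
    have ht1 : t ∈ Ico (0 : ℝ) 1 := ⟨ht.1, ht.2.trans_le hap1⟩
    rw [← T_eq_bvTransform hμ f ht1, ← T_eq_bvTransform hμ g ht1]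
    exact hT (Ico_subset_Ioo_left ham ht)
  have hleft : EqOn (fun s => f (-s)) (fun s => g (-s)) (Ico 0 (-am)) := by
    refine hm.eqOn_of_bvTransform_eqOn (hf.comp continuousOn_neg (mapsTo_neg_Ico_Ioo hap))
      (hg.comp continuousOn_neg (mapsTo_neg_Ico_Ioo hap)) fun t ht => ?_
    have ht1 : t ∈ Ico (0 : ℝ) 1 := ⟨ht.1, ht.2.trans_le (neg_le.1 ham1)⟩
    rw [← T_neg_eq_bvTransform hμ f ht1, ← T_neg_eq_bvTransform hμ g ht1]
    exact hT (mapsTo_neg_Ico_Ioo hap ht)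
  intro t ht
  rcases le_total 0 t with h0 | h0
  · exact hright ⟨h0, ht.2⟩
  · simpa using hleft (x := -t) ⟨neg_nonneg.2 h0, neg_lt_neg ht.1⟩

lemma memDI.exists_tendsto_T_nhdsLT (hf : P.memDI am ap f) (hap : 0 < ap) :
    ∃ L, Tendsto (P.T f) (𝓝[<] ap) (𝓝 L) := by
  obtain ⟨-, ⟨A, hA⟩, -, ⟨B, hB⟩, -⟩ := hf
  refine ⟨A + ap * B, (hA.add ((tendsto_id.mono_left nhdsWithin_le_nhds).mul hB)).congr' ?_⟩
  filter_upwards [Ioo_mem_nhdsLT hap] with t ht using (T_of_nonneg ht.1.le).symm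

lemma memDI.exists_tendsto_T_nhdsGT (hf : P.memDI am ap f) (ham : am < 0) :
    ∃ L, Tendsto (P.T f) (𝓝[>] am) (𝓝 L) := by
  obtain ⟨-, -, ⟨A, hA⟩, -, B, hB⟩ := hf
  refine ⟨A - am * B, (hA.sub ((tendsto_id.mono_left nhdsWithin_le_nhds).mul hB)).congr' ?_⟩
  filter_upwards [Ioo_mem_nhdsGT ham] with t ht using (T_of_nonpos ht.2.le).symm

lemma memDI_of_T_eqOn {Lm Lp : ℝ} (ham : am < 0) (hap : 0 < ap) (hf : ContinuousOn f (Ioo am ap))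
    (hg : ContinuousOn g (Icc am ap)) (hT : EqOn (P.T f) g (Ioo am ap))
    (hp : Tendsto (fun t => P.integ (Ioc 0 t) f) (𝓝[<] ap) (𝓝 Lp))
    (hm : Tendsto (fun t => P.integ (Ico t 0) f) (𝓝[>] am) (𝓝 Lm)) : P.memDI am ap f := by
  have hab : am < ap := ham.trans hap
  have hgp : Tendsto g (𝓝[<] ap) (𝓝 (g ap)) :=
    (hg ap ⟨hab.le, le_rfl⟩).mono_left (nhdsWithin_le_iff.2 (Icc_mem_nhdsLT hab))
  have hgm : Tendsto g (𝓝[>] am) (𝓝 (g am)) :=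
    (hg am ⟨le_rfl, hab.le⟩).mono_left (nhdsWithin_le_iff.2 (Icc_mem_nhdsGT hab))
  refine ⟨hf,
    ⟨_, (hgp.sub ((tendsto_id.mono_left nhdsWithin_le_nhds).mul hp)).congr' ?_⟩,
    ⟨_, (hgm.add ((tendsto_id.mono_left nhdsWithin_le_nhds).mul hm)).congr' ?_⟩, ⟨_, hp⟩, _, hm⟩
  · filter_upwards [Ioo_mem_nhdsLT hap] with t ht
    rw [← hT ⟨ham.trans ht.1, ht.2⟩, T_of_nonneg ht.1.le, id, add_sub_cancel_right]
  · filter_upwards [Ioo_mem_nhdsGT ham] with t ht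
    rw [← hT ⟨ht.1, ht.2.trans hap⟩, T_of_nonpos ht.2.le, id, sub_add_cancel]

lemma BVplusOn.exists_T_eq (h : P.BVplusOn am ap) (ham1 : -1 ≤ am) (ham : am < 0) (hap : 0 < ap)
    (hap1 : ap ≤ 1) (hg : ContinuousOn g (Icc am ap)) :
    ∃ f, P.memDI am ap f ∧ EqOn (P.T f) g (Ioo am ap) := by
  obtain ⟨μ, σ, _, hμ, hp, hm⟩ := h.exists_halfBVplus ham1 ham hap hap1
  obtain ⟨fp, hfp, hTp, Lp, hLp⟩ :=
    hp.exists_bvTransform_eq hap (hg.mono (Icc_subset_Icc_left ham.le))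
  obtain ⟨fm, hfm, hTm, Lm, hLm⟩ := hm.exists_bvTransform_eq (neg_pos.2 ham) <|
    hg.comp continuousOn_neg fun t ht => ⟨le_neg.1 ht.2, (neg_nonpos.2 ht.1).trans hap.le⟩
  have h0 : fp 0 = fm 0 := by
    have hTp0 := hTp ⟨le_rfl, hap⟩
    have hTm0 := hTm ⟨le_rfl, neg_pos.2 ham⟩
    rw [comp_apply, neg_zero, ← hTp0] at hTm0
    simpa [bvTransform_zero, (hp.pos hap).ne'] using hTm0.symm
  obtain ⟨f, hfr, hfl⟩ := exists_eq_of_nonneg_of_neg h0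
  have hT : EqOn (P.T f) g (Ioo am ap) := by
    intro t ht
    rcases le_total 0 t with ht0 | ht0
    · rw [T_eq_bvTransform hμ f ⟨ht0, ht.2.trans_le hap1⟩,
        bvTransform_congr ht0 fun s hs => hfr s hs.1, hTp ⟨ht0, ht.2⟩]
    · obtain ⟨u, rfl⟩ := neg_surjective t
      have hu : 0 ≤ u := neg_nonpos.1 ht0
      have hua : u < -am := lt_neg.1 ht.1
      rw [T_neg_eq_bvTransform hμ f ⟨hu, hua.trans_le (neg_le.1 ham1)⟩,
        bvTransform_congr hu fun s hs => hfl s hs.1, hTm ⟨hu, hua⟩, comp_apply]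
  have hf : ContinuousOn f (Ioo am ap) := continuousOn_Ioo_of_Ico_neg
    (hfp.congr fun s hs => hfr s hs.1) (hfm.congr fun s hs => hfl s hs.1)
  refine ⟨f, memDI_of_T_eqOn ham hap hf hg hT (hLp.congr fun t => ?_)
    ((hLm.comp tendsto_neg_nhdsGT).congr fun t => ?_), hT⟩
  · rw [hμ]
    exact setIntegral_congr_fun measurableSet_Ioc fun s hs => by simp only [hfr s hs.1.le]
  · rw [comp_apply, ← neg_neg t, integ_Ico_neg hμ, neg_neg]
    exact setIntegral_congr_fun measurableSet_Ioc fun s hs => by simp only [hfl s hs.1.le]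

end NormBV0

/-- The perturbed transform `f ↦ T_{R,ν}f + c·f(0)·|·|`, extended
linearly outside `I = (a₋,a₊)`, is a bijection from `D^I_{R,ν}` onto the continuous
functions on `[-1,1]` that are linear through the origin on `[a₊,1]` and `[-1,a₋]`. -/
theorem bv0_perturbed_bijection_subinterval (P : NormBV0) (am ap : ℝ)
    (h1 : -1 ≤ am) (h2 : am < 0) (h3 : 0 < ap) (h4 : ap ≤ 1)
    (hBV : P.BVplusOn am ap) (c : ℝ) :
    (∀ f : ℝ → ℝ, P.memDI am ap f →
      ∃ g : ℝ → ℝ, ContinuousOn g (Set.Icc (-1 : ℝ) 1) ∧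
        (∀ t ∈ Set.Ioo am ap, g t = P.T f t + c * f 0 * |t|) ∧
        (∀ t ∈ Set.Icc ap 1, g t = g ap / ap * t) ∧
        (∀ t ∈ Set.Icc (-1 : ℝ) am, g t = g am / am * t)) ∧
    (∀ f₁ f₂ : ℝ → ℝ, P.memDI am ap f₁ → P.memDI am ap f₂ →
      (∀ t ∈ Set.Ioo am ap, P.T f₁ t + c * f₁ 0 * |t| = P.T f₂ t + c * f₂ 0 * |t|) →
      ∀ t ∈ Set.Ioo am ap, f₁ t = f₂ t) ∧
    (∀ g : ℝ → ℝ, ContinuousOn g (Set.Icc (-1 : ℝ) 1) →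
      (∀ t ∈ Set.Icc ap 1, g t = g ap / ap * t) →
      (∀ t ∈ Set.Icc (-1 : ℝ) am, g t = g am / am * t) →
      ∃ f : ℝ → ℝ, P.memDI am ap f ∧
        ∀ t ∈ Set.Ioo am ap, P.T f t + c * f 0 * |t| = g t) := by
  have hR0 : 0 < P.R 0 := hBV.2.2.1 0 ⟨h2, h3⟩
  refine ⟨fun f hf => ?_, fun f₁ f₂ hf₁ hf₂ h => ?_, fun g hg _ _ => ?_⟩
  · have hpert : Continuous fun t : ℝ => c * f 0 * |t| := by fun_prop
    obtain ⟨Lm, hLm⟩ := hf.exists_tendsto_T_nhdsGT h2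
    obtain ⟨Lp, hLp⟩ := hf.exists_tendsto_T_nhdsLT h3
    obtain ⟨g, hg, hgT, hgp, hgm⟩ := exists_linear_extension h2 h3
      ((hBV.continuousOn_T h1 h2 h3 h4 hf.1).add hpert.continuousOn)
      (hLm.add hpert.continuousWithinAt) (hLp.add hpert.continuousWithinAt)
    exact ⟨g, hg.continuousOn, hgT, fun t ht => hgp t ht.1, fun t ht => hgm t ht.2⟩
  · have h0 : f₁ 0 = f₂ 0 := by
      simpa [NormBV0.T_zero, hR0.ne'] using h 0 ⟨h2, h3⟩
    refine hBV.eqOn_of_T_eqOn h1 h2 h3 h4 hf₁.1 hf₂.1 fun t ht => ?_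
    simpa only [h0, add_left_inj] using h t ht
  · have hpert : ContinuousOn (fun t => g t - c * (g 0 / P.R 0) * |t|) (Icc am ap) :=
      (hg.mono (Icc_subset_Icc h1 h4)).sub (by fun_prop)
    obtain ⟨f, hf, hT⟩ := hBV.exists_T_eq h1 h2 h3 h4 hpert
    have hf0 : f 0 = g 0 / P.R 0 := by
      simpa [NormBV0.T_zero, eq_div_iff hR0.ne', mul_comm] using hT ⟨h2, h3⟩
    exact ⟨f, hf, fun t ht => by rw [hT ht, hf0, sub_add_cancel]⟩
end

section
/- Let (R, ν) be a normalized BV₀ pair on (−1,1) of class BV₊ on I = (a₋, a₊), let a ∈ {a₋, a₊}, and let f ∈ D^I_{R,ν}. Then: (i) if lim_{t→a, t∈I} R(t) = 0, then lim_{t→a, t∈I} R(t)·f(t) = 0; and (ii) if lim_{t→a, t∈I} R(t) exists and is strictly positive, then lim_{t→a, t∈I} f(t) exists in ℝ. -/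
open MeasureTheory Set Filter Function Topology

/-!
Since `ν` has constant sign and `R → 0`, either `R` or `-R` decreases to `0` towards the endpoint
`a`, and its increments are dominated by `|ν|` because `|s| ≤ 1`; say it is `R`, and `a > 0`. If
`R f` had a positive limit, then for some `c > 0` and all `u` near `a` we would have `R f ≥ c`,
hence `f ≥ c / R u`, on `[u, a)`, so that `R u * ∫_{(u,a)} f d|ν| ≥ c * |ν|((u,a)) ≥ c * R u`. The
tails `∫_{(u,a)} f d|ν|` would all be at least `c`, although they tend to `0`. The same applies to
`-f`, so `R f → 0`; the left endpoint follows by the reflection `s ↦ -s`.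
-/

theorem exists_tendsto_of_tendsto_mul {α G : Type*} [CommGroupWithZero G] [TopologicalSpace G]
    [ContinuousMul G] [ContinuousInv₀ G] [T1Space G] {l : Filter α} {R f : α → G} {L K : G}
    (hL : L ≠ 0) (hR : Tendsto R l (𝓝 L)) (hRf : Tendsto (fun t => R t * f t) l (𝓝 K)) :
    ∃ M, Tendsto f l (𝓝 M) := by
  refine ⟨K / L, (hRf.div hR hL).congr' ?_⟩
  filter_upwards [hR.eventually_ne hL] with t ht
  exact mul_div_cancel_left₀ _ ht

theorem mul_measureReal_le_mul_setIntegral {α : Type*} [MeasurableSpace α] {μ : Measure α}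
    {S : Set α} {R f : α → ℝ} {c K : ℝ} (hS : MeasurableSet S)
    (hf : IntegrableOn f S μ) (hc : 0 < c) (hR : ∀ s ∈ S, R s ∈ Icc 0 K)
    (hcf : ∀ s ∈ S, c ≤ R s * f s) : c * μ.real S ≤ K * ∫ s in S, f s ∂μ := by
  have hcKf : ∀ s ∈ S, c ≤ K * f s := fun s hs =>
    have hfs : 0 < f s := pos_of_mul_pos_right (hc.trans_le (hcf s hs)) (hR s hs).1
    (hcf s hs).trans (mul_le_mul_of_nonneg_right (hR s hs).2 hfs.le)
  have hcint : IntegrableOn (fun _ => c) S μ :=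
    (hf.const_mul K).mono' aestronglyMeasurable_const <| ae_restrict_of_forall_mem hS fun s hs =>
      (Real.norm_of_nonneg hc.le).trans_le (hcKf s hs)
  calc c * μ.real S = ∫ _ in S, c ∂μ := by rw [setIntegral_const, smul_eq_mul, mul_comm]
    _ ≤ ∫ s in S, K * f s ∂μ :=
      setIntegral_mono_on hcint (hf.const_mul K) hS hcKf
    _ = K * ∫ s in S, f s ∂μ := integral_const_mul K f

section SetIntegral

variable {E : Type*} [NormedAddCommGroup E] [NormedSpace ℝ E] {μ : Measure ℝ} {g : ℝ → E}
  {u v b : ℝ}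

theorem setIntegral_Ioc_sub_setIntegral_Ioc (hbu : b ≤ u) (huv : u ≤ v)
    (hg : IntegrableOn g (Ioc b v) μ) :
    (∫ s in Ioc b v, g s ∂μ) - ∫ s in Ioc b u, g s ∂μ = ∫ s in Ioc u v, g s ∂μ := by
  rw [← Ioc_union_Ioc_eq_Ioc hbu huv] at hg ⊢
  rw [setIntegral_union (Ioc_disjoint_Ioc_of_le le_rfl) measurableSet_Ioc hg.left_of_union
    hg.right_of_union, add_sub_cancel_left]

theorem setIntegral_Ico_sub_setIntegral_Ico (huv : u ≤ v) (hvb : v ≤ b)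
    (hg : IntegrableOn g (Ico u b) μ) :
    (∫ s in Ico u b, g s ∂μ) - ∫ s in Ico v b, g s ∂μ = ∫ s in Ico u v, g s ∂μ := by
  rw [← Ico_union_Ico_eq_Ico huv hvb] at hg ⊢
  rw [setIntegral_union (Ico_disjoint_Ico_same) measurableSet_Ico hg.left_of_union
    hg.right_of_union, add_sub_cancel_right]

theorem setIntegral_Ioc_measure_neg (μ : Measure ℝ) (g : ℝ → E) (u v : ℝ) :
    ∫ s in Ioc u v, g s ∂μ.neg = ∫ s in Ico (-v) (-u), g (-s) ∂μ := by
  rw [Measure.neg, measurableEmbedding_neg.setIntegral_map, neg_preimage, neg_Ioc]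

end SetIntegral

section Endpoint

variable {μ : Measure ℝ} {R f : ℝ → ℝ} {a b L J : ℝ}

theorem le_of_tendsto_setIntegral_of_le_mul {u c : ℝ} (hua : u < a) (hR : AntitoneOn R (Ico u a))
    (hRμ : ∀ v ∈ Ico u a, R u - R v ≤ μ.real (Ioc u v))
    (hf : ∀ v ∈ Ico u a, IntegrableOn f (Ioc u v) μ) (hR0 : Tendsto R (𝓝[<] a) (𝓝 0))
    (hJ : Tendsto (fun v => ∫ s in Ioc u v, f s ∂μ) (𝓝[<] a) (𝓝 J)) (hc : 0 < c)
    (hcf : ∀ s ∈ Ico u a, c ≤ R s * f s) : c ≤ J := by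
  have hu : u ∈ Ico u a := left_mem_Ico.2 hua
  have hRnonneg : ∀ s ∈ Ico u a, 0 ≤ R s := fun s hs => by
    refine le_of_tendsto hR0 ?_
    filter_upwards [Ioo_mem_nhdsLT hs.2] with v hv
    exact hR hs ⟨hs.1.trans hv.1.le, hv.2⟩ hv.1.le
  have hRu : 0 < R u :=
    (hRnonneg u hu).lt_of_ne' (left_ne_zero_of_mul (hc.trans_le (hcf u hu)).ne')
  have hle : ∀ᶠ v in 𝓝[<] a, c * (R u - R v) ≤ R u * ∫ s in Ioc u v, f s ∂μ := by
    filter_upwards [Ioo_mem_nhdsLT hua] with v hv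
    have hv' : v ∈ Ico u a := Ioo_subset_Ico_self hv
    have hsub : ∀ s ∈ Ioc u v, s ∈ Ico u a := fun s hs => ⟨hs.1.le, hs.2.trans_lt hv.2⟩
    calc c * (R u - R v) ≤ c * μ.real (Ioc u v) := by gcongr; exact hRμ v hv'
      _ ≤ R u * ∫ s in Ioc u v, f s ∂μ :=
        mul_measureReal_le_mul_setIntegral measurableSet_Ioc (hf v hv') hc
          (fun s hs => ⟨hRnonneg s (hsub s hs), hR hu (hsub s hs) hs.1.le⟩)
          (fun s hs => hcf s (hsub s hs))
  have hlim : c * (R u - 0) ≤ R u * J :=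
    le_of_tendsto_of_tendsto ((hR0.const_sub (R u)).const_mul c) (hJ.const_mul (R u)) hle
  rw [sub_zero, mul_comm] at hlim
  exact le_of_mul_le_mul_left hlim hRu

theorem nonpos_of_tendsto_mul_nhdsLT (hba : b < a) (hR : AntitoneOn R (Ico b a))
    (hRμ : ∀ ⦃u v⦄, b ≤ u → u ≤ v → v < a → R u - R v ≤ μ.real (Ioc u v))
    (hf : ∀ t ∈ Ico b a, IntegrableOn f (Ioc b t) μ)
    (hR0 : Tendsto R (𝓝[<] a) (𝓝 0)) (hL : Tendsto (fun t => R t * f t) (𝓝[<] a) (𝓝 L))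
    (hJ : Tendsto (fun t => ∫ s in Ioc b t, f s ∂μ) (𝓝[<] a) (𝓝 J)) : L ≤ 0 := by
  by_contra! hLpos
  obtain ⟨d, hda, hd⟩ : ∃ d < a, ∀ t ∈ Ioo d a, L / 2 < R t * f t :=
    (mem_nhdsLT_iff_exists_Ioo_subset' hba).1 (hL.eventually_const_lt (half_lt_self hLpos))
  have htail : ∀ᶠ u in 𝓝[<] a, L / 2 ≤ J - ∫ s in Ioc b u, f s ∂μ := by
    filter_upwards [Ioo_mem_nhdsLT (max_lt hba hda)] with u hu
    obtain ⟨hbu, hdu⟩ := max_lt_iff.1 hu.1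
    have hsub : Ico u a ⊆ Ico b a := Ico_subset_Ico_left hbu.le
    refine le_of_tendsto_setIntegral_of_le_mul hu.2 (hR.mono hsub)
      (fun v hv => hRμ hbu.le hv.1 hv.2)
      (fun v hv => (hf v (hsub hv)).mono_set (Ioc_subset_Ioc_left hbu.le)) hR0 ?_ (half_pos hLpos)
      (fun s hs => (hd s ⟨hdu.trans_le hs.1, hs.2⟩).le)
    refine (hJ.sub_const _).congr' ?_
    filter_upwards [Ioo_mem_nhdsLT hu.2] with v hv
    exact setIntegral_Ioc_sub_setIntegral_Ioc hbu.le hv.1.le (hf v (hsub (Ioo_subset_Ico_self hv)))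
  linarith [ge_of_tendsto (hJ.const_sub J) htail]

theorem eq_zero_of_tendsto_mul_nhdsLT (hba : b < a) (hR : AntitoneOn R (Ico b a))
    (hRμ : ∀ ⦃u v⦄, b ≤ u → u ≤ v → v < a → R u - R v ≤ μ.real (Ioc u v))
    (hf : ∀ t ∈ Ico b a, IntegrableOn f (Ioc b t) μ)
    (hR0 : Tendsto R (𝓝[<] a) (𝓝 0)) (hL : Tendsto (fun t => R t * f t) (𝓝[<] a) (𝓝 L))
    (hJ : Tendsto (fun t => ∫ s in Ioc b t, f s ∂μ) (𝓝[<] a) (𝓝 J)) : L = 0 := by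
  refine le_antisymm (nonpos_of_tendsto_mul_nhdsLT hba hR hRμ hf hR0 hL hJ) ?_
  have hneg : -L ≤ 0 := nonpos_of_tendsto_mul_nhdsLT (f := -f) (J := -J) hba hR hRμ
    (fun t ht => (hf t ht).neg) hR0 (by simpa only [Pi.neg_apply, mul_neg] using hL.neg)
    (by simpa only [Pi.neg_apply, integral_neg] using hJ.neg)
  exact neg_nonpos.1 hneg

theorem eq_zero_of_tendsto_mul_nhdsGT (hab : a < b) (hR : MonotoneOn R (Ioc a b))
    (hRμ : ∀ ⦃u v⦄, a < u → u ≤ v → v ≤ b → R v - R u ≤ μ.real (Ico u v))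
    (hf : ∀ t ∈ Ioc a b, IntegrableOn f (Ico t b) μ)
    (hR0 : Tendsto R (𝓝[>] a) (𝓝 0)) (hL : Tendsto (fun t => R t * f t) (𝓝[>] a) (𝓝 L))
    (hJ : Tendsto (fun t => ∫ s in Ico t b, f s ∂μ) (𝓝[>] a) (𝓝 J)) : L = 0 := by
  have hmem : ∀ t ∈ Ico (-b) (-a), -t ∈ Ioc a b := fun t ht =>
    ⟨lt_neg_of_lt_neg ht.2, neg_le_of_neg_le ht.1⟩
  have hneg : Tendsto Neg.neg (𝓝[<] (-a)) (𝓝[>] a) := by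
    simpa only [neg_neg] using tendsto_neg_nhdsLT (a := -a)
  refine eq_zero_of_tendsto_mul_nhdsLT (μ := μ.neg) (R := R ∘ Neg.neg) (f := f ∘ Neg.neg)
    (a := -a) (b := -b) (J := J) (neg_lt_neg hab)
    (fun u hu v hv huv => hR (hmem v hv) (hmem u hu) (neg_le_neg huv)) (fun u v hbu huv hva => ?_)
    (fun t ht => ?_) (hR0.comp hneg) (hL.comp hneg) ?_
  · rw [measureReal_def, Measure.neg_apply, neg_Ioc]
    exact hRμ (lt_neg_of_lt_neg hva) (neg_le_neg huv) (neg_le_of_neg_le hbu)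
  · rw [Measure.neg, measurableEmbedding_neg.integrableOn_map_iff, neg_preimage, neg_Ioc, neg_neg]
    simpa only [comp_def, neg_neg] using hf (-t) (hmem t ht)
  · simpa only [setIntegral_Ioc_measure_neg, comp_def, neg_neg] using hJ.comp hneg

end Endpoint

namespace NormBV0

/-- The total variation measure `|ν|` of the signed measure `ν = νp - νm`; it is the sum of the
two parts because these are mutually singular. -/
noncomputable def variation (P : NormBV0) : Measure ℝ :=
  P.νp + P.νm

variable {P : NormBV0}

theorem variation_ne_top_of_isCompact {K : Set ℝ} (hK : IsCompact K) (hK1 : K ⊆ Ioo (-1) 1) :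
    P.variation K ≠ ⊤ := by
  rw [variation, Measure.add_apply]
  exact ENNReal.add_ne_top.2 ⟨P.locfin_p K hK hK1, P.locfin_m K hK hK1⟩

theorem locallyIntegrableOn_of_continuousOn {g : ℝ → ℝ} {S : Set ℝ} (hS : IsLocallyClosed S)
    (hS1 : S ⊆ Ioo (-1) 1) (hg : ContinuousOn g S) : LocallyIntegrableOn g S P.variation :=
  (locallyIntegrableOn_iff hS).2 fun _ hKS hK =>
    (hg.mono hKS).integrableOn_of_subset_isCompact hK hK.measurableSet Subset.rfl
      (variation_ne_top_of_isCompact hK (hKS.trans hS1))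

theorem exists_setIntegral_variation_eq_mul_integ (hν : P.νm = 0 ∨ P.νp = 0) :
    ∃ σ : ℝ, σ ≠ 0 ∧ ∀ S g, ∫ s in S, g s ∂P.variation = σ * P.integ S g := by
  rcases hν with h0 | h0
  · exact ⟨1, one_ne_zero, fun S g => by simp [variation, integ, h0]⟩
  · exact ⟨-1, neg_ne_zero.2 one_ne_zero, fun S g => by simp [variation, integ, h0]⟩

theorem mul_R_sub_mul_R_mem_Icc_of_nonneg {σ u v : ℝ}
    (hσ : ∀ S g, ∫ s in S, g s ∂P.variation = σ * P.integ S g) (hu : 0 ≤ u) (huv : u ≤ v)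
    (hv : v < 1) : σ * P.R u - σ * P.R v ∈ Icc 0 (P.variation.real (Ioc u v)) := by
  have hIcc : ∀ {t}, 0 ≤ t → Icc t v ⊆ Ioo (-1) 1 := fun ht =>
    Icc_subset_Ioo (neg_one_lt_zero.trans_le ht) hv
  have hid : IntegrableOn (fun s => s) (Ioc 0 v) P.variation :=
    (locallyIntegrableOn_of_continuousOn isLocallyClosed_Icc (hIcc le_rfl) continuousOn_id
      |>.integrableOn_isCompact isCompact_Icc).mono_set Ioc_subset_Icc_self
  have hfund : ∀ t ∈ Ico (0 : ℝ) 1, σ * P.R t = σ * P.R 0 - ∫ s in Ioc 0 t, s ∂P.variation := by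
    intro t ht
    rw [hσ, ← mul_sub, P.fund_pos t ht, integ]
  have hsub : σ * P.R u - σ * P.R v = ∫ s in Ioc u v, s ∂P.variation := by
    rw [hfund u ⟨hu, huv.trans_lt hv⟩, hfund v ⟨hu.trans huv, hv⟩, sub_sub_sub_cancel_left,
      setIntegral_Ioc_sub_setIntegral_Ioc hu huv hid]
  have hfin : P.variation (Ioc u v) ≠ ⊤ := measure_ne_top_of_subset Ioc_subset_Icc_self
    (variation_ne_top_of_isCompact isCompact_Icc (hIcc hu))
  have hnorm : ∀ s ∈ Ioc u v, ‖s‖ ≤ 1 := fun s hs =>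
    abs_le.2 ⟨by linarith [hs.1], hs.2.trans hv.le⟩
  rw [hsub, ← one_mul (P.variation.real _)]
  exact ⟨setIntegral_nonneg measurableSet_Ioc fun s hs => hu.trans hs.1.le,
    (le_abs_self _).trans (norm_setIntegral_le_of_norm_le_const hfin.lt_top hnorm)⟩

theorem mul_R_sub_mul_R_mem_Icc_of_nonpos {σ u v : ℝ}
    (hσ : ∀ S g, ∫ s in S, g s ∂P.variation = σ * P.integ S g) (hu : -1 < u) (huv : u ≤ v)
    (hv : v ≤ 0) : σ * P.R v - σ * P.R u ∈ Icc 0 (P.variation.real (Ico u v)) := by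
  have hIcc : ∀ {t}, t ≤ 0 → Icc u t ⊆ Ioo (-1) 1 := fun ht =>
    Icc_subset_Ioo hu (ht.trans_lt one_pos)
  have hid : IntegrableOn (fun s => s) (Ico u 0) P.variation :=
    (locallyIntegrableOn_of_continuousOn isLocallyClosed_Icc (hIcc le_rfl) continuousOn_id
      |>.integrableOn_isCompact isCompact_Icc).mono_set Ico_subset_Icc_self
  have hfund : ∀ t ∈ Ioc (-1 : ℝ) 0, σ * P.R t = σ * P.R 0 + ∫ s in Ico t 0, s ∂P.variation := by
    intro t ht
    rw [hσ, ← mul_add, P.fund_neg t ht, integ]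
  have hsub : σ * P.R v - σ * P.R u = -∫ s in Ico u v, s ∂P.variation := by
    rw [hfund u ⟨hu, huv.trans hv⟩, hfund v ⟨hu.trans_le huv, hv⟩, add_sub_add_left_eq_sub,
      ← setIntegral_Ico_sub_setIntegral_Ico huv hv hid, neg_sub]
  have hfin : P.variation (Ico u v) ≠ ⊤ := measure_ne_top_of_subset Ico_subset_Icc_self
    (variation_ne_top_of_isCompact isCompact_Icc (hIcc hv))
  have hnorm : ∀ s ∈ Ico u v, ‖s‖ ≤ 1 := fun s hs =>
    abs_le.2 ⟨hu.le.trans hs.1, by linarith [hs.2]⟩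
  rw [hsub, ← one_mul (P.variation.real _)]
  exact ⟨neg_nonneg.2 (setIntegral_nonpos measurableSet_Ico fun s hs => hs.2.le.trans hv),
    (neg_le_abs _).trans (norm_setIntegral_le_of_norm_le_const hfin.lt_top hnorm)⟩

theorem tendsto_mul_zero_nhdsLT (hν : P.νm = 0 ∨ P.νp = 0) {a : ℝ} {f : ℝ → ℝ} (ha0 : 0 < a)
    (ha1 : a ≤ 1) (hf : ∀ t ∈ Ico 0 a, IntegrableOn f (Ioc 0 t) P.variation)
    (hRf : ∃ L, Tendsto (fun t => P.R t * f t) (𝓝[<] a) (𝓝 L))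
    (hνf : ∃ J, Tendsto (fun t => P.integ (Ioc 0 t) f) (𝓝[<] a) (𝓝 J))
    (hR0 : Tendsto P.R (𝓝[<] a) (𝓝 0)) :
    Tendsto (fun t => P.R t * f t) (𝓝[<] a) (𝓝 0) := by
  obtain ⟨σ, hσ0, hσ⟩ := exists_setIntegral_variation_eq_mul_integ hν
  obtain ⟨L, hL⟩ := hRf
  obtain ⟨J, hJ⟩ := hνf
  have hbound : ∀ ⦃u v⦄, 0 ≤ u → u ≤ v → v < a →
      σ * P.R u - σ * P.R v ∈ Icc 0 (P.variation.real (Ioc u v)) := fun _ _ hu huv hva =>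
    mul_R_sub_mul_R_mem_Icc_of_nonneg hσ hu huv (hva.trans_le ha1)
  have hσL : σ * L = 0 := eq_zero_of_tendsto_mul_nhdsLT (R := fun t => σ * P.R t) (J := σ * J) ha0
    (fun u hu v hv huv => sub_nonneg.1 (hbound hu.1 huv hv.2).1)
    (fun _ _ hu huv hva => (hbound hu huv hva).2) hf
    (by simpa only [mul_zero] using hR0.const_mul σ)
    (by simpa only [mul_assoc] using hL.const_mul σ) (by simpa only [hσ] using hJ.const_mul σ)
  rwa [(mul_eq_zero_iff_left hσ0).1 hσL] at hL

theorem tendsto_mul_zero_nhdsGT (hν : P.νm = 0 ∨ P.νp = 0) {a : ℝ} {f : ℝ → ℝ} (ha0 : a < 0)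
    (ha1 : -1 ≤ a) (hf : ∀ t ∈ Ioc a 0, IntegrableOn f (Ico t 0) P.variation)
    (hRf : ∃ L, Tendsto (fun t => P.R t * f t) (𝓝[>] a) (𝓝 L))
    (hνf : ∃ J, Tendsto (fun t => P.integ (Ico t 0) f) (𝓝[>] a) (𝓝 J))
    (hR0 : Tendsto P.R (𝓝[>] a) (𝓝 0)) :
    Tendsto (fun t => P.R t * f t) (𝓝[>] a) (𝓝 0) := by
  obtain ⟨σ, hσ0, hσ⟩ := exists_setIntegral_variation_eq_mul_integ hν
  obtain ⟨L, hL⟩ := hRf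
  obtain ⟨J, hJ⟩ := hνf
  have hbound : ∀ ⦃u v⦄, a < u → u ≤ v → v ≤ 0 →
      σ * P.R v - σ * P.R u ∈ Icc 0 (P.variation.real (Ico u v)) := fun _ _ hau huv hv =>
    mul_R_sub_mul_R_mem_Icc_of_nonpos hσ (ha1.trans_lt hau) huv hv
  have hσL : σ * L = 0 := eq_zero_of_tendsto_mul_nhdsGT (R := fun t => σ * P.R t) (J := σ * J) ha0
    (fun u hu v hv huv => sub_nonneg.1 (hbound hu.1 huv hv.2).1)
    (fun _ _ hau huv hv => (hbound hau huv hv).2) hf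
    (by simpa only [mul_zero] using hR0.const_mul σ)
    (by simpa only [mul_assoc] using hL.const_mul σ) (by simpa only [hσ] using hJ.const_mul σ)
  rwa [(mul_eq_zero_iff_left hσ0).1 hσL] at hL

end NormBV0

theorem bv0_endpoint_limits_general (P : NormBV0) (am ap : ℝ)
    (h1 : -1 ≤ am) (h2 : am < 0) (h3 : 0 < ap) (h4 : ap ≤ 1)
    (hν : P.νm = 0 ∨ P.νp = 0) (f : ℝ → ℝ) (hf : LocallyIntegrableOn f (Ioo am ap) P.variation)
    (hRfp : ∃ L : ℝ, Tendsto (fun t => P.R t * f t) (𝓝[<] ap) (𝓝 L))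
    (hRfm : ∃ L : ℝ, Tendsto (fun t => P.R t * f t) (𝓝[>] am) (𝓝 L))
    (hνfp : ∃ J : ℝ, Tendsto (fun t => P.integ (Ioc 0 t) f) (𝓝[<] ap) (𝓝 J))
    (hνfm : ∃ J : ℝ, Tendsto (fun t => P.integ (Ico t 0) f) (𝓝[>] am) (𝓝 J)) :
    ((Tendsto P.R (𝓝[<] ap) (𝓝 0) →
        Tendsto (fun t => P.R t * f t) (𝓝[<] ap) (𝓝 0)) ∧
      (∀ L : ℝ, L ≠ 0 → Tendsto P.R (𝓝[<] ap) (𝓝 L) →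
        ∃ M : ℝ, Tendsto f (𝓝[<] ap) (𝓝 M))) ∧
    ((Tendsto P.R (𝓝[>] am) (𝓝 0) →
        Tendsto (fun t => P.R t * f t) (𝓝[>] am) (𝓝 0)) ∧
      (∀ L : ℝ, L ≠ 0 → Tendsto P.R (𝓝[>] am) (𝓝 L) →
        ∃ M : ℝ, Tendsto f (𝓝[>] am) (𝓝 M))) := by
  have hfint : ∀ u v, am < u → v < ap → IntegrableOn f (Icc u v) P.variation := fun _ _ hu hv =>
    hf.integrableOn_compact_subset (Icc_subset_Ioo hu hv) isCompact_Icc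
  refine ⟨⟨NormBV0.tendsto_mul_zero_nhdsLT hν h3 h4 (fun t ht => ?_) hRfp hνfp, fun L hL hR => ?_⟩,
    NormBV0.tendsto_mul_zero_nhdsGT hν h2 h1 (fun t ht => ?_) hRfm hνfm, fun L hL hR => ?_⟩
  · exact (hfint 0 t h2 ht.2).mono_set Ioc_subset_Icc_self
  · exact hRfp.elim fun _ h => exists_tendsto_of_tendsto_mul hL hR h
  · exact (hfint t 0 ht.1 h3).mono_set Ico_subset_Icc_self
  · exact hRfm.elim fun _ h => exists_tendsto_of_tendsto_mul hL hR h

/-- Endpoint behavior of functions in `D^I_{R,ν}` for a `BV₊` pair on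
`I = (a₋,a₊)`: (i) if `R → 0` at an endpoint then `R·f → 0` there; (ii) if `R` tends to a
strictly positive limit at an endpoint then `f` has a limit there. -/
theorem bv0_endpoint_limits (P : NormBV0) (am ap : ℝ)
    (h1 : -1 ≤ am) (h2 : am < 0) (h3 : 0 < ap) (h4 : ap ≤ 1)
    (hBV : P.BVplusOn am ap) (f : ℝ → ℝ) (hf : P.memDI am ap f) :
    ((Tendsto P.R (𝓝[<] ap) (𝓝 0) →
        Tendsto (fun t => P.R t * f t) (𝓝[<] ap) (𝓝 0)) ∧
      (∀ L : ℝ, 0 < L → Tendsto P.R (𝓝[<] ap) (𝓝 L) →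
        ∃ M : ℝ, Tendsto f (𝓝[<] ap) (𝓝 M))) ∧
    ((Tendsto P.R (𝓝[>] am) (𝓝 0) →
        Tendsto (fun t => P.R t * f t) (𝓝[>] am) (𝓝 0)) ∧
      (∀ L : ℝ, 0 < L → Tendsto P.R (𝓝[>] am) (𝓝 L) →
        ∃ M : ℝ, Tendsto f (𝓝[>] am) (𝓝 M))) := by
  obtain ⟨hcont, hRfp, hRfm, hνfp, hνfm⟩ := hf
  have hfint : LocallyIntegrableOn f (Ioo am ap) P.variation :=
    NormBV0.locallyIntegrableOn_of_continuousOn isOpen_Ioo.isLocallyClosed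
      (Ioo_subset_Ioo h1 h4) hcont
  obtain ⟨⟨hp0, hp⟩, hm0, hm⟩ := bv0_endpoint_limits_general P am ap h1 h2 h3 h4 hBV.2.2.2 f hfint
    hRfp hRfm hνfp hνfm
  exact ⟨⟨hp0, fun L hL => hp L hL.ne'⟩, hm0, fun L hL => hm L hL.ne'⟩
end

section
/- Let C ⊆ ℝⁿ be a body of revolution, let t ∈ (−1,1), let ū be a unit vector orthogonal to e_n, and set u_t = t·e_n + √(1−t²)·ū. Then the one-sided limits ∂₊h̄_C(t) = lim_{t′→t⁺} (h̄_C(t′) − h̄_C(t))/(t′ − t) and ∂₋h̄_C(t) = lim_{t′→t⁻} (h̄_C(t′) − h̄_C(t))/(t′ − t) exist, and they satisfy ∂₊h̄_C(t) = h_{F(C,u_t)}(e_n − (t/√(1−t²))·ū) and ∂₋h̄_C(t) = −h_{F(C,u_t)}(−e_n + (t/√(1−t²))·ū). -/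
open Set Filter Topology Function
open scoped RealInnerProductSpace Pointwise

/-- Euclidean space `ℝ^(n+1)`. -/
abbrev Euc (n : ℕ) := EuclideanSpace ℝ (Fin (n + 1))

/-- The last standard basis vector `e_n`. -/
noncomputable def eAx (n : ℕ) : Euc n := EuclideanSpace.single (Fin.last n) (1 : ℝ)

/-- Support function of a set `K`. -/
noncomputable def suppFn {n : ℕ} (K : Set (Euc n)) (u : Euc n) : ℝ :=
  sSup ((fun x => ⟪x, u⟫) '' K)

/-- The face of `K` in direction `u`. -/
def face {n : ℕ} (K : Set (Euc n)) (u : Euc n) : Set (Euc n) :=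
  {x ∈ K | ⟪x, u⟫ = suppFn K u}

/-- `C` is a body of revolution with axis `e_n`: it is invariant under every linear
isometry fixing `e_n`. -/
def IsRevBody {n : ℕ} (C : Set (Euc n)) : Prop :=
  C.Nonempty ∧ IsCompact C ∧ Convex ℝ C ∧
    ∀ ρ : Euc n ≃ₗᵢ[ℝ] Euc n, ρ (eAx n) = eAx n → ρ '' C = C

/-- The restricted support function `h̄_C(t) = h_C(t·e_n + √(1-t²)·ū)`. -/
noncomputable def hbar {n : ℕ} (C : Set (Euc n)) (ub : Euc n) (t : ℝ) : ℝ :=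
  suppFn C (t • eAx n + Real.sqrt (1 - t ^ 2) • ub)

/-!
For a nonempty compact `K`, the directional derivative of `h_K` at `u` in direction `v` is
`h_{F(K,u)}(v)`. A point of `F(K,u)` is a subgradient of `h_K`
at `u`, which bounds difference quotients from below; a subgradient at the perturbed direction
bounds them from above, and upper semicontinuity of `u ↦ F(K,u)` closes the gap. The estimate is
uniform enough to let the direction vary along with the step, so it differentiates `h_K` along the
curve `t ↦ t·e_n + √(1-t²)·ū`, whose velocity is `e_n - (t/√(1-t²))·ū`.
-/

section SupportFunction

variable {n : ℕ} {K : Set (Euc n)}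

lemma inner_le_suppFn (hK : IsCompact K) {x : Euc n} (hx : x ∈ K) (u : Euc n) :
    ⟪x, u⟫ ≤ suppFn K u :=
  le_csSup (hK.bddAbove_image (by fun_prop)) (mem_image_of_mem _ hx)

lemma face_nonempty (hK : IsCompact K) (hne : K.Nonempty) (u : Euc n) : (face K u).Nonempty := by
  obtain ⟨x, hx, hsup⟩ := hK.exists_sSup_image_eq hne (f := fun x => ⟪x, u⟫) (by fun_prop)
  exact ⟨x, hx, hsup.symm⟩

lemma isCompact_face (hK : IsCompact K) (u : Euc n) : IsCompact (face K u) :=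
  hK.inter_right (isClosed_eq (f := fun x : Euc n => ⟪x, u⟫) (by fun_prop) continuous_const)

lemma inner_sub_le_suppFn_sub_of_mem_face (hK : IsCompact K) {x u : Euc n} (hx : x ∈ face K u)
    (w : Euc n) : ⟪x, w - u⟫ ≤ suppFn K w - suppFn K u := by
  rw [inner_sub_right, hx.2]
  exact sub_le_sub_right (inner_le_suppFn hK hx.1 w) _

lemma eventually_notMem_face (hK : IsCompact K) {x u : Euc n} (hx : x ∈ K) (hxu : x ∉ face K u) :
    ∀ᶠ p : Euc n × Euc n in 𝓝 (x, u), p.1 ∉ face K p.2 := by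
  obtain ⟨z, hzK, hzu⟩ := face_nonempty hK ⟨x, hx⟩ u
  have hlt : ⟪x, u⟫ < ⟪z, u⟫ :=
    hzu ▸ (inner_le_suppFn hK hx u).lt_of_ne fun h => hxu ⟨hx, h⟩
  have hnear : ∀ᶠ p : Euc n × Euc n in 𝓝 (x, u), ⟪p.1, p.2⟫ < ⟪z, p.2⟫ :=
    ContinuousAt.eventually_lt (by fun_prop) (by fun_prop) hlt
  filter_upwards [hnear] with p hp hmem
  exact hp.not_ge (hmem.2 ▸ inner_le_suppFn hK hzK p.2)

lemma eventually_forall_mem_face_inner_lt (hK : IsCompact K) {u v : Euc n} {c : ℝ}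
    (hc : suppFn (face K u) v < c) :
    ∀ᶠ p : Euc n × Euc n in 𝓝 (u, v), ∀ x ∈ face K p.1, ⟪x, p.2⟫ < c := by
  suffices h : ∀ᶠ p : Euc n × Euc n in 𝓝 (u, v), ∀ x ∈ K, x ∈ face K p.1 → ⟪x, p.2⟫ < c from
    h.mono fun p hp x hx => hp x hx.1 hx
  refine hK.eventually_forall_of_forall_eventually fun x hxK => ?_
  by_cases hx : x ∈ face K u
  · have hxc : ⟪x, v⟫ < c := (inner_le_suppFn (isCompact_face hK u) hx v).trans_lt hc
    have hnear : ∀ᶠ q : (Euc n × Euc n) × Euc n in 𝓝 ((u, v), x), ⟪q.2, q.1.2⟫ < c :=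
      ContinuousAt.eventually_lt (by fun_prop) continuousAt_const hxc
    exact hnear.mono fun q hq _ => hq
  · have hproj : Tendsto (fun q : (Euc n × Euc n) × Euc n => (q.2, q.1.1)) (𝓝 ((u, v), x))
        (𝓝 (x, u)) := Continuous.tendsto (by fun_prop) _
    exact (hproj.eventually (eventually_notMem_face hK hxK hx)).mono fun q hq hmem =>
      absurd hmem hq

lemma tendsto_suppFn_add_smul_sub_div {ι : Type*} {l : Filter ι} {s : ι → ℝ} {q : ι → Euc n}
    {v : Euc n} (hK : IsCompact K) (hne : K.Nonempty) (u : Euc n)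
    (hs : Tendsto s l (𝓝[>] 0)) (hq : Tendsto q l (𝓝 v)) :
    Tendsto (fun i => (suppFn K (u + s i • q i) - suppFn K u) / s i) l
      (𝓝 (suppFn (face K u) v)) := by
  obtain ⟨hs₀, hpos⟩ := tendsto_nhdsWithin_iff.1 hs
  refine tendsto_order.2 ⟨fun c hc => ?_, fun c hc => ?_⟩
  · obtain ⟨y, hyF, hyv⟩ := face_nonempty (isCompact_face hK u) (face_nonempty hK hne u) v
    have hy : Tendsto (fun i => ⟪y, q i⟫) l (𝓝 (suppFn (face K u) v)) :=
      hyv ▸ tendsto_const_nhds.inner hq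
    filter_upwards [hpos, hy.eventually_const_lt hc] with i hi hci
    have hsub := inner_sub_le_suppFn_sub_of_mem_face hK hyF (u + s i • q i)
    rw [add_sub_cancel_left, real_inner_smul_right] at hsub
    exact hci.trans_le ((le_div_iff₀' hi).2 hsub)
  · have hw : Tendsto (fun i => u + s i • q i) l (𝓝 u) := by
      simpa using tendsto_const_nhds.add (hs₀.smul hq)
    filter_upwards [hpos, (hw.prodMk_nhds hq).eventually
      (eventually_forall_mem_face_inner_lt hK hc)] with i hi hci
    obtain ⟨x, hx⟩ := face_nonempty hK hne (u + s i • q i)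
    have hsub := inner_sub_le_suppFn_sub_of_mem_face hK hx u
    rw [sub_add_cancel_left, inner_neg_right, real_inner_smul_right] at hsub
    exact ((div_le_iff₀' hi).2 (by linarith)).trans_lt (hci x hx)

lemma tendsto_slope_suppFn_comp_right {γ : ℝ → Euc n} {v : Euc n} {t : ℝ} (hK : IsCompact K)
    (hne : K.Nonempty) (hγ : HasDerivWithinAt γ v (Ioi t) t) :
    Tendsto (fun r => (suppFn K (γ r) - suppFn K (γ t)) / (r - t)) (𝓝[>] t)
      (𝓝 (suppFn (face K (γ t)) v)) := by
  have hslope := (hasDerivWithinAt_iff_tendsto_slope' self_notMem_Ioi).1 hγ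
  have hstep : Tendsto (fun r => r - t) (𝓝[>] t) (𝓝[>] 0) :=
    ((continuous_sub_right t).tendsto' t 0 (sub_self t)).inf
      (tendsto_principal_principal.2 fun _ hr => mem_Ioi.2 (sub_pos.2 hr))
  refine (tendsto_suppFn_add_smul_sub_div hK hne (γ t) hstep hslope).congr fun r => ?_
  rw [sub_smul_slope, vsub_eq_sub, add_sub_cancel]

lemma tendsto_slope_suppFn_comp_left {γ : ℝ → Euc n} {v : Euc n} {t : ℝ} (hK : IsCompact K)
    (hne : K.Nonempty) (hγ : HasDerivWithinAt γ v (Iio t) t) :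
    Tendsto (fun r => (suppFn K (γ r) - suppFn K (γ t)) / (r - t)) (𝓝[<] t)
      (𝓝 (-suppFn (face K (γ t)) (-v))) := by
  have hslope := (hasDerivWithinAt_iff_tendsto_slope' self_notMem_Iio).1 hγ
  have hstep : Tendsto (fun r => t - r) (𝓝[<] t) (𝓝[>] 0) :=
    ((continuous_sub_left t).tendsto' t 0 (sub_self t)).inf
      (tendsto_principal_principal.2 fun _ hr => mem_Ioi.2 (sub_pos.2 hr))
  refine (tendsto_suppFn_add_smul_sub_div hK hne (γ t) hstep hslope.neg).neg.congr fun r => ?_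
  rw [← neg_sub r t, neg_smul_neg, sub_smul_slope, vsub_eq_sub, add_sub_cancel, div_neg, neg_neg]

end SupportFunction

lemma hasDerivAt_sqrt_one_sub_sq {t : ℝ} (ht : t ∈ Ioo (-1 : ℝ) 1) :
    HasDerivAt (fun r : ℝ => √(1 - r ^ 2)) (-(t / √(1 - t ^ 2))) t := by
  have hpos : 0 < 1 - t ^ 2 := by nlinarith [ht.1, ht.2]
  convert ((hasDerivAt_pow 2 t).const_sub 1).sqrt hpos.ne' using 1
  field_simp
  push_cast
  ring

lemma hasDerivAt_smul_add_sqrt_one_sub_sq_smul {E : Type*} [NormedAddCommGroup E]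
    [NormedSpace ℝ E] (a b : E) {t : ℝ} (ht : t ∈ Ioo (-1 : ℝ) 1) :
    HasDerivAt (fun r : ℝ => r • a + √(1 - r ^ 2) • b) (a - (t / √(1 - t ^ 2)) • b) t := by
  simpa only [one_smul, neg_smul, ← sub_eq_add_neg, id] using!
    ((hasDerivAt_id t).smul_const a).add ((hasDerivAt_sqrt_one_sub_sq ht).smul_const b)

theorem revBody_one_sided_derivatives_general {n : ℕ} {C : Set (Euc n)} (hC : IsCompact C)
    (hne : C.Nonempty) {t : ℝ} (ht : t ∈ Ioo (-1 : ℝ) 1) (ub : Euc n) :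
    Tendsto (fun t' => (hbar C ub t' - hbar C ub t) / (t' - t)) (𝓝[>] t)
      (𝓝 (suppFn (face C (t • eAx n + √(1 - t ^ 2) • ub))
        (eAx n - (t / √(1 - t ^ 2)) • ub))) ∧
    Tendsto (fun t' => (hbar C ub t' - hbar C ub t) / (t' - t)) (𝓝[<] t)
      (𝓝 (-suppFn (face C (t • eAx n + √(1 - t ^ 2) • ub))
        (-eAx n + (t / √(1 - t ^ 2)) • ub))) := by
  have hcurve := hasDerivAt_smul_add_sqrt_one_sub_sq_smul (eAx n) ub ht
  refine ⟨tendsto_slope_suppFn_comp_right hC hne hcurve.hasDerivWithinAt, ?_⟩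
  rw [← sub_eq_neg_add, ← neg_sub (eAx n)]
  exact tendsto_slope_suppFn_comp_left hC hne hcurve.hasDerivWithinAt

/-- For a body of revolution `C` and `t ∈ (-1,1)`, the one-sided
derivatives of `h̄_C` at `t` exist and satisfy
`∂₊h̄_C(t) = h_{F(C,u_t)}(e_n - (t/√(1-t²))·ū)` and
`∂₋h̄_C(t) = -h_{F(C,u_t)}(-e_n + (t/√(1-t²))·ū)`. -/
theorem revBody_one_sided_derivatives {n : ℕ} (hn : 1 ≤ n) (C : Set (Euc n))
    (hC : IsRevBody C) (t : ℝ) (ht : t ∈ Set.Ioo (-1 : ℝ) 1)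
    (ub : Euc n) (hub : ‖ub‖ = 1) (horth : ⟪eAx n, ub⟫ = 0) :
    Tendsto (fun t' => (hbar C ub t' - hbar C ub t) / (t' - t)) (𝓝[>] t)
      (𝓝 (suppFn (face C (t • eAx n + Real.sqrt (1 - t ^ 2) • ub))
        (eAx n - (t / Real.sqrt (1 - t ^ 2)) • ub))) ∧
    Tendsto (fun t' => (hbar C ub t' - hbar C ub t) / (t' - t)) (𝓝[<] t)
      (𝓝 (-suppFn (face C (t • eAx n + Real.sqrt (1 - t ^ 2) • ub))
        (-eAx n + (t / Real.sqrt (1 - t ^ 2)) • ub))) := by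
  exact revBody_one_sided_derivatives_general hC.2.1 hC.1 ht ub
end

section
/- Let C ⊆ ℝⁿ be a body of revolution. Then there exist a unique body of revolution C̃ ⊆ ℝⁿ whose topological boundary contains no vertical segment of positive length (i.e., there are no x ∈ ℝⁿ and ℓ′ > 0 with {x + s·e_n : 0 ≤ s ≤ ℓ′} contained in the boundary of C̃) and a unique real number ℓ ≥ 0 such that C equals the Minkowski sum C̃ + {s·e_n : 0 ≤ s ≤ ℓ}. -/
open Set Filter Topology Function
open scoped RealInnerProductSpace Pointwise

/-!
Among the points of a body of revolution farthest from the axis (its rim), let `ℓ` be the greatest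
length of a vertical segment in the body starting at one of them. The decomposition is forced: a
rim point is never interior, so in a body without vertical boundary segments this greatest length
is `0`, and adding a vertical segment of length `ℓ` raises it by exactly `ℓ`; and a convex set `D`
is recovered from `D + [0, ℓ]e` as the set of points `x` for which both `x` and `x + ℓe` lie in the
sum.

Conversely let `ℓ` be the greatest length for `C`, and `D` the set of `x` with `x, x + ℓe ∈ C`.
Rotating a longest rim segment and filling in the disks it sweeps out puts a segment of length `ℓ`
over every point of the shadow of `C`, whence `C = D + [0, ℓ]e`. A vertical boundary segment of `D`
on the rim would lengthen a longest one, and one nearer the axis has interior points, since its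
endpoints can be pushed outwards within `D`.
-/

section Segment

variable {E : Type*} [AddCommGroup E] [Module ℝ E] {e : E} {l : ℝ} {C D : Set E}

/-- The segment from the origin to `l • e`, along which bodies are decomposed. It is empty for
`l < 0`. -/
def axialSegment (e : E) (l : ℝ) : Set E := (fun s : ℝ => s • e) '' Icc 0 l

/-- The Minkowski difference of a convex set `C` and `axialSegment e l`, for `0 ≤ l`. By convexity
it is enough to ask for the endpoints of the translated segment to lie in `C`. -/
def segmentErosion (e : E) (l : ℝ) (C : Set E) : Set E := {x | x ∈ C ∧ x + l • e ∈ C}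

lemma mem_add_axialSegment {x : E} :
    x ∈ D + axialSegment e l ↔ ∃ d ∈ D, ∃ s ∈ Icc 0 l, d + s • e = x := by
  simp [axialSegment, Set.mem_add]

lemma ordConnected_setOf_add_smul_mem (hC : Convex ℝ C) (x e : E) :
    OrdConnected {t : ℝ | x + t • e ∈ C} := by
  simpa [preimage, AffineMap.lineMap_apply, add_comm] using
    (hC.affine_preimage (AffineMap.lineMap x (x + e))).ordConnected

lemma convex_segmentErosion (hC : Convex ℝ C) : Convex ℝ (segmentErosion e l C) :=
  hC.inter (hC.translate_preimage_left _)

lemma segmentErosion_add_axialSegment (hD : Convex ℝ D) (hl : 0 ≤ l) :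
    segmentErosion e l (D + axialSegment e l) = D := by
  ext x
  simp only [segmentErosion, mem_ofPred_eq, mem_add_axialSegment]
  constructor
  · rintro ⟨⟨d, hd, s, hs, hds⟩, d', hd', s', hs', hds'⟩
    have hlo : x + (-s) • e ∈ D := by rwa [← hds, neg_smul, add_neg_cancel_right]
    have hhi : x + (l - s') • e ∈ D := by
      rwa [sub_smul, ← add_sub_assoc, ← hds', add_sub_cancel_right]
    simpa using (ordConnected_setOf_add_smul_mem hD x e).out hlo hhi
      ⟨neg_nonpos.2 hs.1, sub_nonneg.2 hs'.2⟩
  · exact fun hx => ⟨⟨x, hx, 0, ⟨le_rfl, hl⟩, by simp⟩, x, hx, l, ⟨hl, le_rfl⟩, rfl⟩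

lemma segmentErosion_add_axialSegment_subset (hC : Convex ℝ C) :
    segmentErosion e l C + axialSegment e l ⊆ C := by
  intro z hz
  obtain ⟨d, ⟨hd, hdl⟩, s, hs, rfl⟩ := mem_add_axialSegment.1 hz
  exact (ordConnected_setOf_add_smul_mem hC d e).out (by simpa using hd) hdl hs

lemma subset_segmentErosion_add_axialSegment (hC : Convex ℝ C) (hl : 0 ≤ l)
    (h : ∀ z ∈ C, ∃ t : ℝ, z + t • e ∈ segmentErosion e l C) :
    C ⊆ segmentErosion e l C + axialSegment e l := by
  intro z hz
  obtain ⟨t, ht, htl⟩ := h z hz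
  rw [add_assoc, ← add_smul] at htl
  have hz' : z + (0 : ℝ) • e ∈ C := by simpa using hz
  have hline := ordConnected_setOf_add_smul_mem hC z e
  rw [mem_add_axialSegment]
  rcases le_total 0 t with h0 | h0
  · refine ⟨z, ⟨hz, hline.out hz' htl ⟨hl, by linarith⟩⟩, 0, ⟨le_rfl, hl⟩, by simp⟩
  rcases le_total (-l) t with h1 | h1
  · refine ⟨z + t • e, ⟨ht, ?_⟩, -t, ⟨by linarith, by linarith⟩, by simp⟩
    rwa [add_assoc, ← add_smul]
  · refine ⟨z + (-l) • e, ⟨hline.out ht hz' ⟨h1, by linarith⟩, ?_⟩, l, ⟨hl, le_rfl⟩, by simp⟩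
    simpa using hz

end Segment

section SameRay

lemma exists_sameRay_norm_eq {F : Type*} [NormedAddCommGroup F] [NormedSpace ℝ F] (u v : F) :
    ∃ w : F, SameRay ℝ u w ∧ ‖w‖ = ‖v‖ := by
  rcases eq_or_ne u 0 with rfl | hu
  · exact ⟨v, SameRay.zero_left v, rfl⟩
  · refine ⟨(‖v‖ / ‖u‖) • u, SameRay.sameRay_nonneg_smul_right u (by positivity), ?_⟩
    rw [norm_smul, norm_div, norm_norm, norm_norm, div_mul_cancel₀ _ (norm_ne_zero_iff.2 hu)]

end SameRay

section AxisDist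

variable {E : Type*} [NormedAddCommGroup E] [InnerProductSpace ℝ E] {e x y : E}

/-- The distance from `x` to the line spanned by `e`, as the norm of the orthogonal component. -/
noncomputable def axisDist (e x : E) : ℝ := ‖(ℝ ∙ e)ᗮ.orthogonalProjectionOnto x‖

lemma continuous_axisDist : Continuous (axisDist e) :=
  (ℝ ∙ e)ᗮ.orthogonalProjectionOnto.continuous.norm

lemma orthogonalProjectionOnto_orthogonal_span_self :
    (ℝ ∙ e)ᗮ.orthogonalProjectionOnto e = 0 :=
  Submodule.orthogonalProjectionOnto_orthogonal_apply_eq_zero (Submodule.mem_span_singleton_self e)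

@[simp]
lemma axisDist_add_smul (t : ℝ) : axisDist e (x + t • e) = axisDist e x := by
  simp [axisDist, orthogonalProjectionOnto_orthogonal_span_self]

lemma norm_le_norm_of_axisDist_le (hinner : ⟪e, y⟫ = ⟪e, x⟫) (hdist : axisDist e y ≤ axisDist e x) :
    ‖y‖ ≤ ‖x‖ := by
  have hproj : (ℝ ∙ e).starProjection y = (ℝ ∙ e).starProjection x := by
    rw [Submodule.starProjection_singleton, Submodule.starProjection_singleton, hinner]
  refine le_of_sq_le_sq ?_ (norm_nonneg x)
  rw [Submodule.norm_sq_eq_add_norm_sq_starProjection y (ℝ ∙ e),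
    Submodule.norm_sq_eq_add_norm_sq_starProjection x (ℝ ∙ e), hproj]
  gcongr
  exact hdist

lemma exists_inner_add_smul_eq (he : e ≠ 0) (x y : E) : ∃ t : ℝ, ⟪e, x + t • e⟫ = ⟪e, y⟫ := by
  refine ⟨(⟪e, y⟫ - ⟪e, x⟫) / ⟪e, e⟫, ?_⟩
  rw [inner_add_right, real_inner_smul_right, div_mul_cancel₀ _ (inner_self_ne_zero.2 he),
    add_sub_cancel]

lemma exists_axisDist_lt (hE : 1 < Module.rank ℝ E) (e x : E) :
    ∃ p, axisDist e x < axisDist e p := by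
  have hspan : ℝ ∙ e ≠ ⊤ := by
    intro htop
    have hrank := rank_span_le (R := ℝ) {e}
    rw [htop, rank_top, Cardinal.mk_singleton] at hrank
    exact hE.not_ge hrank
  have : Nontrivial (ℝ ∙ e)ᗮ :=
    Submodule.nontrivial_iff_ne_bot.2 (Submodule.orthogonal_eq_bot_iff.not.2 hspan)
  obtain ⟨v, hv⟩ := NormedSpace.exists_lt_norm ℝ (ℝ ∙ e)ᗮ (axisDist e x)
  refine ⟨v, hv.trans_eq ?_⟩
  rw [axisDist, Submodule.orthogonalProjectionOnto_mem_subspace_eq_self]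

end AxisDist

section AxiallySymmetric

variable {E : Type*} [NormedAddCommGroup E] [InnerProductSpace ℝ E] {e x p : E} {C : Set E}

/-- Invariance under the linear isometries fixing `e`. -/
def IsAxiallySymmetric (e : E) (C : Set E) : Prop :=
  ∀ ρ : E ≃ₗᵢ[ℝ] E, ρ e = e → ρ '' C = C

lemma isAxiallySymmetric_univ : IsAxiallySymmetric e univ :=
  fun ρ _ => image_univ_of_surjective ρ.surjective

namespace IsAxiallySymmetric

lemma apply_mem_iff (hC : IsAxiallySymmetric e C) {ρ : E ≃ₗᵢ[ℝ] E} (hρ : ρ e = e) :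
    ρ x ∈ C ↔ x ∈ C := by
  conv_lhs => rw [← hC ρ hρ]
  exact ρ.injective.mem_set_image

protected lemma segmentErosion (hC : IsAxiallySymmetric e C) (l : ℝ) :
    IsAxiallySymmetric e (segmentErosion e l C) := by
  intro ρ hρ
  ext y
  obtain ⟨x, rfl⟩ := ρ.surjective y
  have hx : ρ x + l • e = ρ (x + l • e) := by rw [map_add, map_smul, hρ]
  rw [ρ.injective.mem_set_image]
  simp only [segmentErosion, mem_ofPred_eq, hx, hC.apply_mem_iff hρ]

/-- The set contains the reflection of `x` across the hyperplane orthogonal to `x - y`, and `y` lies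
between the two. -/
lemma mem_of_axisDist_le (hC : IsAxiallySymmetric e C) (hconv : Convex ℝ C) {y : E} (hx : x ∈ C)
    (hinner : ⟪e, y⟫ = ⟪e, x⟫) (hdist : axisDist e y ≤ axisDist e x) : y ∈ C := by
  obtain rfl | hne := eq_or_ne x y
  · exact hx
  set u := x - y with hu
  have hunorm : 0 < ‖u‖ ^ 2 := by have := sub_ne_zero.2 hne; positivity
  have hfix : (ℝ ∙ u)ᗮ.reflection e = e := by
    refine Submodule.reflection_mem_subspace_eq_self ?_
    rw [Submodule.mem_orthogonal_singleton_iff_inner_left, hu, inner_sub_right, hinner, sub_self]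
  have hrefl : (ℝ ∙ u)ᗮ.reflection x = y + (1 - 2 * (⟪u, x⟫ / ‖u‖ ^ 2)) • u := by
    rw [Submodule.reflection_orthogonal_apply, Submodule.reflection_singleton_apply, hu]
    simp only [RCLike.ofReal_real_eq_id, id_eq]
    module
  have hbetween : 1 - 2 * (⟪u, x⟫ / ‖u‖ ^ 2) ≤ 0 := by
    have hnorm := pow_le_pow_left₀ (norm_nonneg y) (norm_le_norm_of_axisDist_le hinner hdist) 2
    have hy : ‖y‖ ^ 2 = ‖x‖ ^ 2 - 2 * ⟪u, x⟫ + ‖u‖ ^ 2 := by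
      rw [real_inner_comm, ← norm_sub_sq_real, hu, sub_sub_cancel]
    rw [sub_nonpos, ← mul_div_assoc, one_le_div hunorm]
    linarith
  have hmem : y + (1 - 2 * (⟪u, x⟫ / ‖u‖ ^ 2)) • u ∈ C := hrefl ▸ (hC.apply_mem_iff hfix).2 hx
  have hmem' : y + (1 : ℝ) • u ∈ C := by rwa [one_smul, hu, add_sub_cancel]
  simpa using (ordConnected_setOf_add_smul_mem hconv y u).out hmem hmem' ⟨hbetween, zero_le_one⟩

lemma mem_of_inner_mem_Icc (hC : IsAxiallySymmetric e C) (hconv : Convex ℝ C) (he : e ≠ 0)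
    {a b y : E} (ha : a ∈ C) (hb : b ∈ C) (hya : axisDist e y ≤ axisDist e a)
    (hyb : axisDist e y ≤ axisDist e b) (hinner : ⟪e, y⟫ ∈ Icc ⟪e, a⟫ ⟪e, b⟫) : y ∈ C := by
  obtain ⟨r, hr⟩ := exists_inner_add_smul_eq he y a
  obtain ⟨s, hs⟩ := exists_inner_add_smul_eq he y b
  have hrC : y + r • e ∈ C := hC.mem_of_axisDist_le hconv ha hr (by simpa using hya)
  have hsC : y + s • e ∈ C := hC.mem_of_axisDist_le hconv hb hs (by simpa using hyb)
  rw [inner_add_right, real_inner_smul_right] at hr hs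
  have hepos : 0 < ⟪e, e⟫ := real_inner_self_pos.2 he
  have hr0 : r ≤ 0 := by nlinarith [hinner.1]
  have hs0 : 0 ≤ s := by nlinarith [hinner.2]
  simpa using (ordConnected_setOf_add_smul_mem hconv y e).out hrC hsC ⟨hr0, hs0⟩

lemma mem_interior_of_inner_mem_Ioo (hC : IsAxiallySymmetric e C) (hconv : Convex ℝ C)
    (he : e ≠ 0) {a b : E} (ha : a ∈ C) (hb : b ∈ C) (hxa : axisDist e x < axisDist e a)
    (hxb : axisDist e x < axisDist e b) (hinner : ⟪e, x⟫ ∈ Ioo ⟪e, a⟫ ⟪e, b⟫) :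
    x ∈ interior C := by
  rw [mem_interior_iff_mem_nhds]
  have hdist := (continuous_axisDist (e := e)).tendsto x
  have hheight : Continuous fun y : E => ⟪e, y⟫ := by fun_prop
  filter_upwards [hdist.eventually_lt_const hxa, hdist.eventually_lt_const hxb,
    hheight.continuousAt.eventually_mem (Ioo_mem_nhds hinner.1 hinner.2)] with y hya hyb hy
  exact hC.mem_of_inner_mem_Icc hconv he ha hb hya.le hyb.le (Ioo_subset_Icc_self hy)

/-- Move `x` towards the point at the height and axis distance of `p` whose orthogonal component
points in the direction of that of `x`. -/
lemma mem_closure_setOf_axisDist_lt (hC : IsAxiallySymmetric e C) (hconv : Convex ℝ C)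
    (hx : x ∈ C) (hp : p ∈ C) (hlt : axisDist e x < axisDist e p) :
    x ∈ closure {y ∈ C | axisDist e x < axisDist e y} := by
  set P := (ℝ ∙ e)ᗮ.orthogonalProjectionOnto
  obtain ⟨w, hray, hw⟩ := exists_sameRay_norm_eq (P x) (P p)
  set q : E := p + (w - P p : (ℝ ∙ e)ᗮ)
  have hPq : P q = w := by
    rw [map_add, Submodule.orthogonalProjectionOnto_mem_subspace_eq_self, add_sub_cancel]
  have hinner : ⟪e, q⟫ = ⟪e, p⟫ := by
    rw [inner_add_right, Submodule.mem_orthogonal_singleton_iff_inner_right.1 (w - P p).2, add_zero]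
  have hq : q ∈ C := hC.mem_of_axisDist_le hconv hp hinner (by
    change ‖P q‖ ≤ ‖P p‖
    rw [hPq, hw])
  have hlim : Tendsto (fun c : ℝ => (1 - c) • x + c • q) (𝓝[>] 0) (𝓝 x) := by
    have hcont : Continuous fun c : ℝ => (1 - c) • x + c • q := by fun_prop
    exact (hcont.tendsto' 0 x (by simp)).mono_left nhdsWithin_le_nhds
  refine mem_closure_of_tendsto hlim ?_
  filter_upwards [Ioo_mem_nhdsGT one_pos] with c ⟨hc0, hc1⟩
  refine ⟨hconv hx hq (sub_nonneg.2 hc1.le) hc0.le (sub_add_cancel 1 c), ?_⟩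
  have hc1' : 0 ≤ 1 - c := sub_nonneg.2 hc1.le
  calc ‖P x‖ = (1 - c) * ‖P x‖ + c * ‖P x‖ := by ring
    _ < (1 - c) * ‖P x‖ + c * ‖P p‖ := by gcongr; exact hlt
    _ = ‖(1 - c) • P x + c • w‖ := by
      rw [((hray.nonneg_smul_left hc1').nonneg_smul_right hc0.le).norm_add,
        norm_smul_of_nonneg hc1', norm_smul_of_nonneg hc0.le, hw]
    _ = ‖P ((1 - c) • x + c • q)‖ := by rw [map_add, map_smul, map_smul, hPq]

lemma add_smul_mem_interior (hC : IsAxiallySymmetric e C) (hconv : Convex ℝ C) (he : e ≠ 0)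
    {r s t : ℝ} (hrs : r < s) (hst : s < t) (hr : x + r • e ∈ C) (ht : x + t • e ∈ C) (hp : p ∈ C)
    (hlt : axisDist e x < axisDist e p) : x + s • e ∈ interior C := by
  have hmono : StrictMono fun c : ℝ => ⟪e, x + c • e⟫ := by
    intro c d hcd
    simp only [inner_add_right, real_inner_smul_right]
    gcongr
    exact real_inner_self_pos.2 he
  have hheight : Continuous fun y : E => ⟪e, y⟫ := by fun_prop
  obtain ⟨a, ha, haC, hxa⟩ := mem_closure_iff.1
    (hC.mem_closure_setOf_axisDist_lt hconv hr hp (by simpa using hlt)) _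
    (isOpen_lt hheight continuous_const) (hmono hrs)
  obtain ⟨b, hb, hbC, hxb⟩ := mem_closure_iff.1
    (hC.mem_closure_setOf_axisDist_lt hconv ht hp (by simpa using hlt)) _
    (isOpen_lt continuous_const hheight) (hmono hst)
  rw [axisDist_add_smul] at hxa hxb
  exact hC.mem_interior_of_inner_mem_Ioo hconv he haC hbC (by simpa using hxa)
    (by simpa using hxb) ⟨ha, hb⟩

end IsAxiallySymmetric

end AxiallySymmetric

section Rim

variable {E : Type*} [NormedAddCommGroup E] [InnerProductSpace ℝ E] {e : E} {l : ℝ} {C D : Set E}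

/-- The points of `C` farthest from the axis. -/
def rim (e : E) (C : Set E) : Set E := {x ∈ C | ∀ y ∈ C, axisDist e y ≤ axisDist e x}

/-- The lengths, in units of `e`, of the segments in direction `e` from a rim point of `C` to a
point of `C`. Negative lengths are allowed. -/
def rimLengths (e : E) (C : Set E) : Set ℝ := {l | ∃ x ∈ rim e C, x + l • e ∈ C}

lemma rim_nonempty (hne : C.Nonempty) (hC : IsCompact C) : (rim e C).Nonempty :=
  hC.exists_isMaxOn hne continuous_axisDist.continuousOn

lemma isCompact_rim (hC : IsCompact C) : IsCompact (rim e C) := by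
  have hrim : rim e C = C ∩ ⋂ y ∈ C, {x | axisDist e y ≤ axisDist e x} := by
    ext x
    simp [rim]
  rw [hrim]
  exact hC.inter_right
    (isClosed_biInter fun y _ => isClosed_le continuous_const continuous_axisDist)

lemma isCompact_rimLengths (he : e ≠ 0) (hC : IsCompact C) : IsCompact (rimLengths e C) := by
  have hlengths : rimLengths e C = (fun l : ℝ => l • e) ⁻¹' (C - rim e C) := by
    ext l
    simp only [rimLengths, mem_ofPred_eq, mem_preimage, Set.mem_sub]
    constructor
    · rintro ⟨x, hx, hxl⟩
      exact ⟨x + l • e, hxl, x, hx, add_sub_cancel_left x _⟩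
    · rintro ⟨y, hy, x, hx, hyx⟩
      exact ⟨x, hx, by rwa [← hyx, add_sub_cancel]⟩
  have hdiff : IsCompact (C - rim e C) := by
    rw [← sub_image_prod]
    exact (hC.prod (isCompact_rim hC)).image continuous_sub
  exact hlengths ▸ (isClosedEmbedding_smul_left he).isCompact_preimage hdiff

lemma zero_mem_rimLengths (hne : C.Nonempty) (hC : IsCompact C) : 0 ∈ rimLengths e C := by
  obtain ⟨x, hx⟩ := rim_nonempty (e := e) hne hC
  exact ⟨x, hx, by simpa using hx.1⟩

lemma exists_isGreatest_rimLengths (he : e ≠ 0) (hne : C.Nonempty) (hC : IsCompact C) :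
    ∃ l, IsGreatest (rimLengths e C) l :=
  (isCompact_rimLengths he hC).exists_isGreatest ⟨0, zero_mem_rimLengths hne hC⟩

lemma rim_add_axialSegment : rim e (D + axialSegment e l) = rim e D + axialSegment e l := by
  ext x
  constructor
  · rintro ⟨hx, hmax⟩
    obtain ⟨d, hd, s, hs, rfl⟩ := mem_add_axialSegment.1 hx
    refine mem_add_axialSegment.2 ⟨d, ⟨hd, fun y hy => ?_⟩, s, hs, rfl⟩
    simpa using hmax _ (mem_add_axialSegment.2 ⟨y, hy, s, hs, rfl⟩)
  · intro hx
    obtain ⟨d, ⟨hd, hmax⟩, s, hs, rfl⟩ := mem_add_axialSegment.1 hx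
    refine ⟨mem_add_axialSegment.2 ⟨d, hd, s, hs, rfl⟩, fun y hy => ?_⟩
    obtain ⟨d', hd', t, -, rfl⟩ := mem_add_axialSegment.1 hy
    simpa using hmax d' hd'

lemma isGreatest_rimLengths_add_axialSegment {m : ℝ} (hl : 0 ≤ l)
    (hD : IsGreatest (rimLengths e D) m) :
    IsGreatest (rimLengths e (D + axialSegment e l)) (m + l) := by
  simp only [rimLengths, rim_add_axialSegment]
  constructor
  · obtain ⟨d, hd, hdm⟩ := hD.1
    refine ⟨d, mem_add_axialSegment.2 ⟨d, hd, 0, ⟨le_rfl, hl⟩, by simp⟩, ?_⟩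
    exact mem_add_axialSegment.2 ⟨d + m • e, hdm, l, ⟨hl, le_rfl⟩, by rw [add_smul, add_assoc]⟩
  · rintro k ⟨x, hx, hxk⟩
    obtain ⟨d, hd, s, hs, rfl⟩ := mem_add_axialSegment.1 hx
    obtain ⟨d', hd', t, ht, hdt⟩ := mem_add_axialSegment.1 hxk
    have hd'eq : d + (s + k - t) • e = d' := by
      rw [sub_smul, add_smul, ← add_sub_assoc, ← add_assoc, ← hdt, add_sub_cancel_right]
    have hle : s + k - t ≤ m := hD.2 ⟨d, hd, hd'eq ▸ hd'⟩
    linarith [hs.1, ht.2]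

/-- The boundary of `D` contains a segment of positive length in direction `e`. -/
def HasAxialBoundarySegment (e : E) (D : Set E) : Prop :=
  ∃ (x : E) (l : ℝ), 0 < l ∧ ∀ s ∈ Icc 0 l, x + s • e ∈ frontier D

lemma rim_subset_frontier (hE : 1 < Module.rank ℝ E) : rim e D ⊆ frontier D := by
  rintro x ⟨hx, hmax⟩
  refine ⟨subset_closure hx, fun hint => ?_⟩
  obtain ⟨p, hp⟩ := exists_axisDist_lt hE e x
  obtain ⟨y, hyD, -, hxy⟩ := mem_closure_iff.1
    (isAxiallySymmetric_univ.mem_closure_setOf_axisDist_lt convex_univ (mem_univ x) (mem_univ p) hp)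
    _ isOpen_interior hint
  exact hxy.not_ge (hmax y (interior_subset hyD))

lemma isGreatest_rimLengths_zero (hE : 1 < Module.rank ℝ E) (hne : D.Nonempty)
    (hcompact : IsCompact D) (hconv : Convex ℝ D) (hseg : ¬ HasAxialBoundarySegment e D) :
    IsGreatest (rimLengths e D) 0 := by
  refine ⟨zero_mem_rimLengths hne hcompact, ?_⟩
  rintro l ⟨x, hx, hxl⟩
  by_contra! hl
  refine hseg ⟨x, l, hl, fun s hs => rim_subset_frontier (e := e) hE ⟨?_, by simpa using hx.2⟩⟩
  exact (ordConnected_setOf_add_smul_mem hconv x e).out (by simpa using hx.1) hxl hs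

end Rim

section BodyOfRevolution

variable {E : Type*} [NormedAddCommGroup E] [InnerProductSpace ℝ E] {e : E} {l : ℝ} {C : Set E}

/-- A convex body invariant under the linear isometries fixing the axis vector `e`. -/
structure IsBodyOfRevolution (e : E) (C : Set E) : Prop where
  nonempty : C.Nonempty
  isCompact : IsCompact C
  convex : Convex ℝ C
  isAxiallySymmetric : IsAxiallySymmetric e C

namespace IsBodyOfRevolution

protected lemma segmentErosion (hC : IsBodyOfRevolution e C) (hl : l ∈ rimLengths e C) :
    IsBodyOfRevolution e (segmentErosion e l C) where
  nonempty := hl.imp fun _ hx => ⟨hx.1.1, hx.2⟩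
  isCompact := hC.isCompact.inter_right (hC.isCompact.isClosed.preimage (by fun_prop))
  convex := convex_segmentErosion hC.convex
  isAxiallySymmetric := hC.isAxiallySymmetric.segmentErosion l

lemma segmentErosion_add_axialSegment_eq (hC : IsBodyOfRevolution e C) (he : e ≠ 0) (hl : 0 ≤ l)
    (hmem : l ∈ rimLengths e C) : segmentErosion e l C + axialSegment e l = C := by
  obtain ⟨p, ⟨hp, hmax⟩, hpl⟩ := hmem
  refine (segmentErosion_add_axialSegment_subset hC.convex).antisymm
    (subset_segmentErosion_add_axialSegment hC.convex hl fun z hz => ?_)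
  obtain ⟨t, ht⟩ := exists_inner_add_smul_eq he z p
  have hdist : axisDist e z ≤ axisDist e p := hmax z hz
  refine ⟨t, hC.isAxiallySymmetric.mem_of_axisDist_le hC.convex hp ht (by simpa using hdist),
    hC.isAxiallySymmetric.mem_of_axisDist_le hC.convex hpl ?_ (by simpa using hdist)⟩
  rw [inner_add_right, ht, inner_add_right]

lemma not_hasAxialBoundarySegment_segmentErosion (hC : IsBodyOfRevolution e C) (he : e ≠ 0)
    (hl : IsGreatest (rimLengths e C) l) :
    ¬ HasAxialBoundarySegment e (segmentErosion e l C) := by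
  have hD := hC.segmentErosion hl.1
  obtain ⟨⟨p, ⟨hp, hmax⟩, hpl⟩, hub⟩ := hl
  rintro ⟨x, k, hk, hfrontier⟩
  have hend : ∀ s ∈ Icc 0 k, x + s • e ∈ segmentErosion e l C :=
    fun s hs => hD.isCompact.isClosed.frontier_subset (hfrontier s hs)
  have hbot := hend 0 ⟨le_rfl, hk.le⟩
  have htop := hend k ⟨hk.le, le_rfl⟩
  have hx : x ∈ C := by simpa using hbot.1
  have hxk : x + (k + l) • e ∈ C := by simpa [add_smul, add_assoc] using htop.2
  rcases (hmax x hx).eq_or_lt with hrim | hlt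
  · have hle : k + l ≤ l := hub ⟨x, ⟨hx, hrim ▸ hmax⟩, hxk⟩
    linarith
  · have hmid : k / 2 ∈ Ioo 0 k := ⟨half_pos hk, half_lt_self hk⟩
    exact (hfrontier (k / 2) (Ioo_subset_Icc_self hmid)).2
      (hD.isAxiallySymmetric.add_smul_mem_interior hD.convex he hmid.1 hmid.2 hbot htop
        ⟨hp, hpl⟩ hlt)

end IsBodyOfRevolution

theorem revBody_unique_decomposition_general (he : e ≠ 0) (hE : 1 < Module.rank ℝ E)
    (hC : IsBodyOfRevolution e C) :
    ∃! p : Set E × ℝ, IsBodyOfRevolution e p.1 ∧ ¬ HasAxialBoundarySegment e p.1 ∧ 0 ≤ p.2 ∧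
      C = p.1 + axialSegment e p.2 := by
  obtain ⟨l, hl⟩ := exists_isGreatest_rimLengths he hC.nonempty hC.isCompact
  have hl0 : 0 ≤ l := hl.2 (zero_mem_rimLengths hC.nonempty hC.isCompact)
  refine ⟨(segmentErosion e l C, l), ⟨hC.segmentErosion hl.1,
    hC.not_hasAxialBoundarySegment_segmentErosion he hl, hl0,
    (hC.segmentErosion_add_axialSegment_eq he hl0 hl.1).symm⟩, ?_⟩
  rintro ⟨D, k⟩ ⟨hD, hseg, hk, rfl⟩
  have hD0 : IsGreatest (rimLengths e D) 0 :=
    isGreatest_rimLengths_zero hE hD.nonempty hD.isCompact hD.convex hseg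
  have hk' : IsGreatest (rimLengths e (D + axialSegment e k)) k := by
    simpa using isGreatest_rimLengths_add_axialSegment hk hD0
  obtain rfl : k = l := hk'.unique hl
  exact Prod.ext (segmentErosion_add_axialSegment hD.convex hk).symm rfl

end BodyOfRevolution

section Euclidean

variable {n : ℕ}

lemma eAx_ne_zero : eAx n ≠ 0 := by simp [eAx]

lemma one_lt_rank_euc (hn : 1 ≤ n) : 1 < Module.rank ℝ (Euc n) :=
  Module.one_lt_rank_of_one_lt_finrank (by rw [finrank_euclideanSpace_fin]; omega)

lemma isBodyOfRevolution_eAx_iff {C : Set (Euc n)} : IsBodyOfRevolution (eAx n) C ↔ IsRevBody C :=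
  ⟨fun h => ⟨h.nonempty, h.isCompact, h.convex, h.isAxiallySymmetric⟩,
    fun h => ⟨h.1, h.2.1, h.2.2.1, h.2.2.2⟩⟩

end Euclidean

/-- Every body of revolution `C` decomposes uniquely as a Minkowski sum
`C = C̃ + {s·e_n : 0 ≤ s ≤ ℓ}` where `C̃` is a body of revolution whose boundary contains
no vertical segment of positive length and `ℓ ≥ 0`. -/
theorem revBody_unique_decomposition {n : ℕ} (hn : 1 ≤ n) (C : Set (Euc n))
    (hC : IsRevBody C) :
    ∃! p : Set (Euc n) × ℝ,
      IsRevBody p.1 ∧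
      (¬ ∃ (x : Euc n) (l : ℝ), 0 < l ∧
        ∀ s ∈ Set.Icc (0 : ℝ) l, x + s • eAx n ∈ frontier p.1) ∧
      0 ≤ p.2 ∧
      C = p.1 + (fun s => s • eAx n) '' Set.Icc (0 : ℝ) p.2 := by
  simpa only [isBodyOfRevolution_eAx_iff] using!
    revBody_unique_decomposition_general eAx_ne_zero (one_lt_rank_euc hn)
      (isBodyOfRevolution_eAx_iff.2 hC)
end
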